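/- For every k ∈ ℕ and ε > 0 there exists δ₀ = δ₀(ε,k) ∈ ℕ such that the following holds for all δ ≥ δ₀: let G = (V,E) be a finite k-uniform linear hypergraph with an edge correspondence σ and weighted lists of colours (L,μ). If for every edge e ∈ E we have (a) μ(e,c) ∈ [exp(−δ^{1/25}), δ^{−1}] for every c ∈ L(e), (b) |L(e)|_μ ≥ 1+ε, and (c) |N_{G,L,σ}(e,v,c)|_μ ≤ 1 for every vertex v ∈ e and colour c ∈ L(e), then there is an (L,σ)-colouring of G. -/

import Mathlib

/-- Two hyperedges are incident if they are distinct and intersect. -/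
def HIncident {V : Type} [DecidableEq V] (e f : Finset V) : Prop :=
  e ≠ f ∧ (e ∩ f).Nonempty

instance {V : Type} [DecidableEq V] (e f : Finset V) : Decidable (HIncident e f) :=
  inferInstanceAs (Decidable (e ≠ f ∧ (e ∩ f).Nonempty))

/-- `σ` is an edge correspondence on the edge set `E`: for incident edges,
`σ_{f,e}` is the inverse of `σ_{e,f}`. -/
def IsEdgeCorrespondence {V : Type} [DecidableEq V] (E : Finset (Finset V))
    (σ : Finset V → Finset V → ℕ ≃ ℕ) : Prop :=
  ∀ e ∈ E, ∀ f ∈ E, HIncident e f → σ f e = (σ e f).symm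

/-- The weighted size `|N_{G,L,σ}(e,v,c)|_μ` of the colour neighbourhood of `(e,v,c)`:
the `μ`-weight of all pairs `(f, c')` with `v ∈ f`, `f ≠ e`, `c' ∈ L f` and
`(f, c')` blocking `(e, c)`, i.e. `σ f e c' = c`. -/
def NWeight {V : Type} [DecidableEq V] (E : Finset (Finset V))
    (L : Finset V → Finset ℕ) (μ : Finset V → ℕ → ℝ)
    (σ : Finset V → Finset V → ℕ ≃ ℕ) (e : Finset V) (v : V) (c : ℕ) : ℝ :=
  ∑ f ∈ E.filter (fun f => v ∈ f ∧ f ≠ e),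
    ∑ c' ∈ (L f).filter (fun c' => σ f e c' = c), μ f c'

/-- An `(L,σ)`-colouring of the hypergraph with edge set `E`. -/
def IsLσColouring {V : Type} [DecidableEq V] (E : Finset (Finset V))
    (L : Finset V → Finset ℕ) (σ : Finset V → Finset V → ℕ ≃ ℕ)
    (γ : Finset V → ℕ) : Prop :=
  (∀ e ∈ E, γ e ∈ L e) ∧
  ∀ e ∈ E, ∀ f ∈ E, HIncident e f → σ e f (γ e) ≠ γ f

/-!
The proof is a semi-random nibble. In one round every pair `(e, c)` is activated independently with
probability `θ * μ e c`; an edge with an activated colour that no activated pair blocks is coloured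
and removed, and every colour blocked by an activated pair is deleted. Scaling the weights down
first by a suitable factor makes all pairs lose the same proportion of their weight. Up to errors of
order `θ ^ 2`, a list weight `ρ` then shrinks by the factor `exp (-θ * k)`, whereas the weight of
the colour neighbourhood at a vertex `v` shrinks by `exp (-θ * (ρ + k - 1))`: its pairs can only be
blocked through the `k - 1` vertices other than `v`, but they also disappear when their edge is
coloured, which happens at rate `θ * ρ`. As `ρ > 1`, the ratio of list weight to neighbourhood
weight grows by a constant. The weights concentrate with error probability `exp (-Ω(√δ))`, which
beats the number of dependencies, so the Lovász local lemma makes all of them behave simultaneously.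
After boundedly many rounds the ratio exceeds `4 * k`, and a weighted form of Rosenfeld's counting
argument completes the colouring.
-/

/-! ### Random subsets and the Lovász local lemma -/

open scoped Classical in
/-- The expectation of `F A` for a random subset `A` of `S` containing each `i ∈ S` independently
with probability `p i`, as a finite sum. -/
noncomputable def subsetExpect {ι : Type*} (p : ι → ℝ) (S : Finset ι) (F : Finset ι → ℝ) : ℝ :=
  ∑ A ∈ S.powerset, (∏ i ∈ A, p i) * (∏ i ∈ S \ A, (1 - p i)) * F A

open scoped Classical in
/-- The probability of `P A` for the random subset `A` of `S` underlying `subsetExpect`. -/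
noncomputable def subsetProb {ι : Type*} (p : ι → ℝ) (S : Finset ι) (P : Finset ι → Prop) : ℝ :=
  subsetExpect p S fun A => if P A then 1 else 0

open scoped Classical in
/-- `F` is determined by `D` if `F A` depends only on the part of `A` inside `D`; used both for
random variables and for events. -/
def DeterminedBy {ι α : Type*} (F : Finset ι → α) (D : Finset ι) : Prop :=
  ∀ A, F A = F (A ∩ D)

section BernoulliSubset

open scoped Classical

variable {ι τ : Type*} {p : ι → ℝ} {S : Finset ι} {F G : Finset ι → ℝ} {P Q : Finset ι → Prop}

lemma subsetExpect_empty : subsetExpect p ∅ F = F ∅ := by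
  simp [subsetExpect]

lemma subsetExpect_insert {i : ι} (hi : i ∉ S) :
    subsetExpect p (insert i S) F =
      subsetExpect p S fun A => (1 - p i) * F A + p i * F (insert i A) := by
  unfold subsetExpect
  rw [Finset.sum_powerset_insert hi, ← Finset.sum_add_distrib]
  refine Finset.sum_congr rfl fun A hA => ?_
  have hiA : i ∉ A := fun h => hi (Finset.mem_powerset.1 hA h)
  have sdiff_without : insert i S \ A = insert i (S \ A) := Finset.insert_sdiff_of_notMem _ hiA
  have sdiff_with : insert i S \ insert i A = S \ A := by
    rw [Finset.insert_sdiff_insert, Finset.sdiff_insert_of_notMem hi]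
  rw [sdiff_without, sdiff_with, Finset.prod_insert hiA, Finset.prod_insert (by simp [hi])]
  ring

lemma subsetExpect_add :
    subsetExpect p S (fun A => F A + G A) = subsetExpect p S F + subsetExpect p S G := by
  simp only [subsetExpect, mul_add, Finset.sum_add_distrib]

lemma subsetExpect_const_mul (c : ℝ) :
    subsetExpect p S (fun A => c * F A) = c * subsetExpect p S F := by
  simp only [subsetExpect, Finset.mul_sum, mul_left_comm]

lemma subsetExpect_sum (T : Finset τ) (F : τ → Finset ι → ℝ) :
    subsetExpect p S (fun A => ∑ a ∈ T, F a A) = ∑ a ∈ T, subsetExpect p S (F a) := by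
  simp only [subsetExpect, Finset.mul_sum]
  exact Finset.sum_comm

lemma subsetExpect_congr (h : ∀ A ⊆ S, F A = G A) : subsetExpect p S F = subsetExpect p S G :=
  Finset.sum_congr rfl fun A hA => by rw [h A (Finset.mem_powerset.1 hA)]

lemma subsetExpect_mono (hp : ∀ i ∈ S, p i ∈ Set.Icc 0 1) (h : ∀ A ⊆ S, F A ≤ G A) :
    subsetExpect p S F ≤ subsetExpect p S G := by
  refine Finset.sum_le_sum fun A hA => ?_
  have hAS := Finset.mem_powerset.1 hA
  refine mul_le_mul_of_nonneg_left (h A hAS) (mul_nonneg ?_ ?_)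
  · exact Finset.prod_nonneg fun i hi => (hp i (hAS hi)).1
  · exact Finset.prod_nonneg fun i hi => sub_nonneg.2 (hp i (Finset.mem_sdiff.1 hi).1).2

lemma subsetExpect_prod (g : ι → ℝ) :
    subsetExpect p S (fun A => ∏ i ∈ A, g i) = ∏ i ∈ S, (1 - p i + p i * g i) := by
  simp only [add_comm (1 - p _), Finset.prod_add, Finset.prod_mul_distrib, subsetExpect]
  exact Finset.sum_congr rfl fun A _ => by ring

lemma subsetExpect_const (c : ℝ) : subsetExpect p S (fun _ => c) = c := by
  have h := subsetExpect_prod (p := p) (S := S) fun _ => 1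
  simp only [Finset.prod_const_one, mul_one, sub_add_cancel] at h
  simpa [h] using subsetExpect_const_mul (p := p) (S := S) (F := fun _ => 1) c

lemma subsetExpect_nonneg (hp : ∀ i ∈ S, p i ∈ Set.Icc 0 1) (h : ∀ A ⊆ S, 0 ≤ F A) :
    0 ≤ subsetExpect p S F :=
  (subsetExpect_const (p := p) (S := S) 0).ge.trans (subsetExpect_mono hp h)

lemma subsetProb_nonneg (hp : ∀ i ∈ S, p i ∈ Set.Icc 0 1) : 0 ≤ subsetProb p S P :=
  subsetExpect_nonneg hp fun A _ => by split_ifs <;> norm_num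

lemma subsetProb_mono (hp : ∀ i ∈ S, p i ∈ Set.Icc 0 1) (h : ∀ A ⊆ S, P A → Q A) :
    subsetProb p S P ≤ subsetProb p S Q := by
  refine subsetExpect_mono hp fun A hA => ?_
  by_cases hP : P A
  · simp [hP, h A hA hP]
  · rw [if_neg hP]
    split_ifs <;> norm_num

lemma subsetProb_eq_zero (h : ∀ A ⊆ S, ¬ P A) : subsetProb p S P = 0 :=
  (subsetExpect_congr fun A hA => if_neg (h A hA)).trans (subsetExpect_const 0)

lemma subsetProb_eq_one (h : ∀ A ⊆ S, P A) : subsetProb p S P = 1 :=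
  (subsetExpect_congr fun A hA => if_pos (h A hA)).trans (subsetExpect_const 1)

lemma subsetProb_or_le (hp : ∀ i ∈ S, p i ∈ Set.Icc 0 1) :
    subsetProb p S (fun A => P A ∨ Q A) ≤ subsetProb p S P + subsetProb p S Q := by
  unfold subsetProb
  rw [← subsetExpect_add]
  refine subsetExpect_mono hp fun A _ => ?_
  by_cases hP : P A <;> by_cases hQ : Q A <;> simp [hP, hQ]

lemma subsetProb_exists_le (hp : ∀ i ∈ S, p i ∈ Set.Icc 0 1) (T : Finset τ)
    (P : τ → Finset ι → Prop) :
    subsetProb p S (fun A => ∃ t ∈ T, P t A) ≤ ∑ t ∈ T, subsetProb p S (P t) := by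
  induction T using Finset.induction_on with
  | empty => exact (subsetProb_eq_zero (by simp)).le
  | insert t T ht ih =>
    simp only [Finset.exists_mem_insert, Finset.sum_insert ht]
    exact (subsetProb_or_le hp).trans (by gcongr)

lemma subsetProb_le_exp_mul (hp : ∀ i ∈ S, p i ∈ Set.Icc 0 1) (t : ℝ)
    (hF : ∀ A ⊆ S, 0 ≤ F A) (h : ∀ A ⊆ S, P A → Real.exp t ≤ F A) :
    subsetProb p S P ≤ Real.exp (-t) * subsetExpect p S F := by
  unfold subsetProb
  rw [← subsetExpect_const_mul]
  refine subsetExpect_mono hp fun A hA => ?_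
  split_ifs with hP
  · simpa [← Real.exp_add] using mul_le_mul_of_nonneg_left (h A hA hP) (Real.exp_pos (-t)).le
  · exact mul_nonneg (Real.exp_pos _).le (hF A hA)

lemma subsetProb_forall_notMem {T : Finset ι} (hT : T ⊆ S) :
    subsetProb p S (fun A => ∀ i ∈ A, i ∉ T) = ∏ i ∈ T, (1 - p i) := by
  calc subsetProb p S (fun A => ∀ i ∈ A, i ∉ T)
    _ = subsetExpect p S fun A => ∏ i ∈ A, if i ∉ T then 1 else 0 :=
      subsetExpect_congr fun A _ => by
        simp only [Finset.prod_ite_zero, Finset.prod_const_one]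
        congr
    _ = ∏ i ∈ S, if i ∈ T then 1 - p i else 1 := by
      rw [subsetExpect_prod]
      exact Finset.prod_congr rfl fun i _ => by by_cases hi : i ∈ T <;> simp [hi]
    _ = ∏ i ∈ T, (1 - p i) := by
      rw [Finset.prod_ite_mem, Finset.inter_eq_right.2 hT]

end BernoulliSubset

namespace DeterminedBy

open scoped Classical

variable {ι α : Type*} {F : Finset ι → α} {D D' : Finset ι}

lemma mono (hF : DeterminedBy F D) (h : D ⊆ D') : DeterminedBy F D' := fun A => by
  rw [hF A, hF (A ∩ D'), Finset.inter_assoc, Finset.inter_eq_right.2 h]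

lemma apply_insert_of_notMem (hF : DeterminedBy F D) {i : ι} (hi : i ∉ D) (A : Finset ι) :
    F (insert i A) = F A := by
  rw [hF (insert i A), hF A, Finset.insert_inter_of_notMem hi]

lemma comp_insert (hF : DeterminedBy F D) (i : ι) : DeterminedBy (fun A => F (insert i A)) D := by
  intro A
  change F (insert i A) = F (insert i (A ∩ D))
  rw [hF (insert i A), hF (insert i (A ∩ D))]
  congr 1
  grind

lemma comp₂ {β γ : Type*} {G : Finset ι → β} (f : α → β → γ) (hF : DeterminedBy F D)
    (hG : DeterminedBy G D) : DeterminedBy (fun A => f (F A) (G A)) D := fun A => by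
  change f (F A) (G A) = f (F (A ∩ D)) (G (A ∩ D))
  rw [← hF A, ← hG A]

end DeterminedBy

section LocalLemma

open scoped Classical

variable {ι τ : Type*} {p : ι → ℝ} {S D D' : Finset ι}

lemma subsetExpect_mul_of_disjoint (hD : Disjoint D D') :
    ∀ {F G : Finset ι → ℝ}, DeterminedBy F D → DeterminedBy G D' →
      subsetExpect p S (fun A => F A * G A) = subsetExpect p S F * subsetExpect p S G := by
  induction S using Finset.induction_on with
  | empty => intros; simp only [subsetExpect_empty]
  | insert i S hi ih =>
    intro F G hF hG
    have average {H : Finset ι → ℝ} {D : Finset ι} (hH : DeterminedBy H D) :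
        DeterminedBy (fun A => (1 - p i) * H A + p i * H (insert i A)) D :=
      hH.comp₂ (fun a b => (1 - p i) * a + p i * b) (hH.comp_insert i)
    simp only [subsetExpect_insert hi]
    rw [← ih (average hF) (average hG)]
    refine subsetExpect_congr fun A _ => ?_
    by_cases hiD : i ∈ D
    · rw [hG.apply_insert_of_notMem (Finset.disjoint_left.1 hD hiD)]
      ring
    · rw [hF.apply_insert_of_notMem hiD]
      ring

lemma subsetProb_and_of_disjoint {P Q : Finset ι → Prop} (hD : Disjoint D D')
    (hP : DeterminedBy P D) (hQ : DeterminedBy Q D') :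
    subsetProb p S (fun A => P A ∧ Q A) = subsetProb p S P * subsetProb p S Q := by
  have indicator {P : Finset ι → Prop} {D : Finset ι} (hP : DeterminedBy P D) :
      DeterminedBy (fun A => if P A then (1 : ℝ) else 0) D := fun A => by
    change (if P A then (1 : ℝ) else 0) = if P (A ∩ D) then 1 else 0
    rw [← hP A]
  unfold subsetProb
  rw [← subsetExpect_mul_of_disjoint hD (indicator hP) (indicator hQ)]
  exact subsetExpect_congr fun A _ => by by_cases P A <;> by_cases Q A <;> simp [*]

variable {T : Finset τ} {B : τ → Finset ι → Prop} {D : τ → Finset ι} {q d : ℝ}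

lemma determinedBy_forall_not {U : Finset τ} (hB : ∀ t ∈ U, DeterminedBy (B t) (D t)) :
    DeterminedBy (fun A => ∀ t ∈ U, ¬ B t A) (U.biUnion D) := fun A =>
  propext <| forall₂_congr fun t ht => by
    rw [(hB t ht).mono (Finset.subset_biUnion_of_mem D ht) A]

lemma subsetProb_and_forall_not_le_of_disjoint (hp : ∀ i ∈ S, p i ∈ Set.Icc 0 1) {U : Finset τ}
    {t : τ} (ht : DeterminedBy (B t) (D t)) (hU : ∀ s ∈ U, DeterminedBy (B s) (D s))
    (hq : subsetProb p S (B t) ≤ q) :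
    subsetProb p S (fun A => B t A ∧ ∀ s ∈ U, ¬ B s A) ≤
      q * subsetProb p S fun A => ∀ s ∈ U.filter fun s => Disjoint (D t) (D s), ¬ B s A := by
  set far := U.filter fun s => Disjoint (D t) (D s)
  have disjoint_far : Disjoint (D t) (far.biUnion D) :=
    (Finset.disjoint_biUnion_right _ _ _).2 fun s hs => (Finset.mem_filter.1 hs).2
  calc subsetProb p S (fun A => B t A ∧ ∀ s ∈ U, ¬ B s A)
    _ ≤ subsetProb p S (fun A => B t A ∧ ∀ s ∈ far, ¬ B s A) :=
      subsetProb_mono hp fun A _ h => ⟨h.1, fun s hs => h.2 s (Finset.filter_subset _ _ hs)⟩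
    _ = subsetProb p S (B t) * subsetProb p S (fun A => ∀ s ∈ far, ¬ B s A) :=
      subsetProb_and_of_disjoint disjoint_far ht
        (determinedBy_forall_not fun s hs => hU s (Finset.filter_subset _ _ hs))
    _ ≤ q * subsetProb p S (fun A => ∀ s ∈ far, ¬ B s A) :=
      mul_le_mul_of_nonneg_right hq (subsetProb_nonneg hp)

lemma subsetProb_and_forall_not_le (hp : ∀ i ∈ S, p i ∈ Set.Icc 0 1)
    (hB : ∀ t ∈ T, DeterminedBy (B t) (D t)) (hq : ∀ t ∈ T, subsetProb p S (B t) ≤ q)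
    (hd : ∀ t ∈ T, ((T.filter fun s => ¬ Disjoint (D t) (D s)).card : ℝ) ≤ d)
    (hqd : 4 * q * d ≤ 1) {U : Finset τ} (hU : U ⊆ T) {t : τ} (ht : t ∈ T) :
    subsetProb p S (fun A => B t A ∧ ∀ s ∈ U, ¬ B s A) ≤
      2 * q * subsetProb p S fun A => ∀ s ∈ U, ¬ B s A := by
  induction U using Finset.strongInduction generalizing t with
  | H U ih =>
  set near := U.filter fun s => ¬ Disjoint (D t) (D s)
  set far := U.filter fun s => Disjoint (D t) (D s)
  set pU := subsetProb p S fun A => ∀ s ∈ U, ¬ B s A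
  set pFar := subsetProb p S fun A => ∀ s ∈ far, ¬ B s A
  have hq0 : 0 ≤ q := (subsetProb_nonneg hp).trans (hq t ht)
  have hpFar : 0 ≤ pFar := subsetProb_nonneg hp
  have near_le (s : τ) (hs : s ∈ near) :
      subsetProb p S (fun A => B s A ∧ ∀ u ∈ far, ¬ B u A) ≤ 2 * q * pFar := by
    obtain ⟨hsU, hst⟩ := Finset.mem_filter.1 hs
    have far_ssubset : far ⊂ U := Finset.filter_ssubset.2 ⟨s, hsU, hst⟩
    exact ih far far_ssubset (far_ssubset.subset.trans hU) (hU hsU)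
  have near_card : (near.card : ℝ) ≤ d :=
    (Nat.cast_le.2 (Finset.card_le_card (Finset.filter_subset_filter _ hU))).trans (hd t ht)
  have pFar_le : pFar ≤ pU + near.card * (2 * q * pFar) := by
    calc pFar
      _ ≤ subsetProb p S (fun A => (∀ s ∈ U, ¬ B s A) ∨
            ∃ s ∈ near, B s A ∧ ∀ u ∈ far, ¬ B u A) :=
        subsetProb_mono hp fun A _ hA => by grind
      _ ≤ pU + ∑ s ∈ near, 2 * q * pFar :=
        (subsetProb_or_le hp).trans (add_le_add_right
          ((subsetProb_exists_le hp _ _).trans (Finset.sum_le_sum near_le)) _)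
      _ = pU + near.card * (2 * q * pFar) := by rw [Finset.sum_const, nsmul_eq_mul]
  have near_total : near.card * (2 * q * pFar) ≤ pFar / 2 := by
    have : near.card * (4 * q) ≤ 1 := by nlinarith
    nlinarith
  calc subsetProb p S (fun A => B t A ∧ ∀ s ∈ U, ¬ B s A)
    _ ≤ q * pFar := subsetProb_and_forall_not_le_of_disjoint hp (hB t ht)
        (fun s hs => hB s (hU hs)) (hq t ht)
    _ ≤ 2 * q * pU := by nlinarith

theorem exists_subset_forall_not_of_local_lemma (hp : ∀ i ∈ S, p i ∈ Set.Icc 0 1)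
    (hB : ∀ t ∈ T, DeterminedBy (B t) (D t)) (hq : ∀ t ∈ T, subsetProb p S (B t) ≤ q)
    (hq_lt : q < 1 / 2)
    (hd : ∀ t ∈ T, ((T.filter fun s => ¬ Disjoint (D t) (D s)).card : ℝ) ≤ d)
    (hqd : 4 * q * d ≤ 1) : ∃ A ⊆ S, ∀ t ∈ T, ¬ B t A := by
  have avoid_pos {U : Finset τ} (hU : U ⊆ T) : 0 < subsetProb p S fun A => ∀ s ∈ U, ¬ B s A := by
    induction U using Finset.induction_on with
    | empty => simp [subsetProb_eq_one]
    | insert t U _ ih =>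
      obtain ⟨ht, hUT⟩ := Finset.insert_subset_iff.1 hU
      have avoid_U_le : subsetProb p S (fun A => ∀ s ∈ U, ¬ B s A) ≤
          subsetProb p S (fun A => ∀ s ∈ insert t U, ¬ B s A) +
            subsetProb p S (fun A => B t A ∧ ∀ s ∈ U, ¬ B s A) :=
        (subsetProb_mono hp fun A _ hA => by grind).trans
          (subsetProb_or_le hp)
      have := subsetProb_and_forall_not_le hp hB hq hd hqd hUT ht
      nlinarith [ih hUT]
  by_contra! h
  refine (avoid_pos subset_rfl).ne' (subsetProb_eq_zero fun A hA hAT => ?_)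
  obtain ⟨t, ht, hBt⟩ := h A hA
  exact hAT t ht hBt

end LocalLemma

/-! ### Concentration for random subsets -/

section ExponentialMoments

open scoped Classical

lemma exp_le_one_add_add_sq_of_abs_le_one {u : ℝ} (h : |u| ≤ 1) :
    Real.exp u ≤ 1 + u + u ^ 2 := by
  linarith [(abs_le.1 (Real.abs_exp_sub_one_sub_id_le h)).2]

lemma bernoulli_mgf_le {q u : ℝ} (hq : q ∈ Set.Icc 0 1) (hu0 : 0 ≤ u) (hu1 : u ≤ 1) :
    1 - q + q * Real.exp u ≤ Real.exp (2 * q * u) := by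
  have exp_u := exp_le_one_add_add_sq_of_abs_le_one ((abs_of_nonneg hu0).trans_le hu1)
  calc 1 - q + q * Real.exp u
    _ ≤ 1 - q + q * (1 + u + u ^ 2) := by gcongr; exact hq.1
    _ ≤ 2 * q * u + 1 := by nlinarith [hq.1, mul_nonneg hu0 (sub_nonneg.2 hu1)]
    _ ≤ Real.exp (2 * q * u) := Real.add_one_le_exp _

lemma centered_bernoulli_mgf_le {q u : ℝ} (hq : q ∈ Set.Icc 0 1) (hu : |u| ≤ 1) :
    (1 - q) * Real.exp (-q * u) + q * Real.exp ((1 - q) * u) ≤ Real.exp (q * u ^ 2) := by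
  obtain ⟨hq0, hq1⟩ := hq
  have hq' : 0 ≤ 1 - q := sub_nonneg.2 hq1
  have absent : |-q * u| ≤ 1 := by
    rw [abs_mul, abs_neg, abs_of_nonneg hq0]
    exact mul_le_one₀ hq1 (abs_nonneg _) hu
  have present : |(1 - q) * u| ≤ 1 := by
    rw [abs_mul, abs_of_nonneg hq']
    exact mul_le_one₀ (sub_le_self 1 hq0) (abs_nonneg _) hu
  calc (1 - q) * Real.exp (-q * u) + q * Real.exp ((1 - q) * u)
    _ ≤ (1 - q) * (1 + -q * u + (-q * u) ^ 2) + q * (1 + (1 - q) * u + ((1 - q) * u) ^ 2) := by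
      gcongr <;> exact exp_le_one_add_add_sq_of_abs_le_one ‹_›
    _ ≤ q * u ^ 2 + 1 := by nlinarith [mul_nonneg (sq_nonneg u) (sq_nonneg q)]
    _ ≤ Real.exp (q * u ^ 2) := Real.add_one_le_exp _

lemma two_point_mgf_le {q l c x y : ℝ} (hq : q ∈ Set.Icc 0 1) (hxy : |y - x| ≤ c)
    (hlc : |l| * c ≤ 1) :
    (1 - q) * Real.exp (l * x) + q * Real.exp (l * y) ≤
      Real.exp (l ^ 2 * (q * c ^ 2)) * Real.exp (l * ((1 - q) * x + q * y)) := by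
  set mean := (1 - q) * x + q * y with mean_def
  set u := l * (y - x) with u_def
  have u_le : |u| ≤ |l| * c := by
    rw [u_def, abs_mul]
    gcongr
  have u_sq_le : q * u ^ 2 ≤ l ^ 2 * (q * c ^ 2) := by
    have := pow_le_pow_left₀ (abs_nonneg u) u_le 2
    rw [sq_abs u, mul_pow |l|, sq_abs l] at this
    nlinarith [hq.1]
  have centered := (centered_bernoulli_mgf_le hq (u_le.trans hlc)).trans (Real.exp_le_exp.2 u_sq_le)
  rw [show l * x = l * mean + -q * u by simp only [mean_def, u_def]; ring,
    show l * y = l * mean + (1 - q) * u by simp only [mean_def, u_def]; ring,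
    Real.exp_add, Real.exp_add]
  nlinarith [Real.exp_pos (l * mean)]

variable {ι : Type*} {p : ι → ℝ} {S : Finset ι}

lemma subsetExpect_exp_mul_le {c : ι → ℝ} {l : ℝ} (hp : ∀ i ∈ S, p i ∈ Set.Icc 0 1)
    (hc : ∀ i ∈ S, |l| * c i ≤ 1) :
    ∀ {F : Finset ι → ℝ}, (∀ A, ∀ i ∈ S, |F (insert i A) - F A| ≤ c i) →
      subsetExpect p S (fun A => Real.exp (l * F A)) ≤
        Real.exp (l * subsetExpect p S F + l ^ 2 * ∑ i ∈ S, p i * c i ^ 2) := by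
  induction S using Finset.induction_on with
  | empty => intros; simp [subsetExpect_empty]
  | insert i S hi ih =>
    intro F hF
    obtain ⟨hpi, hpS⟩ := (Finset.forall_mem_insert _ _ _).1 hp
    obtain ⟨hci, hcS⟩ := (Finset.forall_mem_insert _ _ _).1 hc
    set G : Finset ι → ℝ := fun A => (1 - p i) * F A + p i * F (insert i A) with hG
    have G_lipschitz (A : Finset ι) (j : ι) (hj : j ∈ S) : |G (insert j A) - G A| ≤ c j := by
      have without := abs_le.1 (hF A j (Finset.mem_insert_of_mem hj))
      have with_i := abs_le.1 (hF (insert i A) j (Finset.mem_insert_of_mem hj))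
      simp only [hG, Finset.insert_comm i j]
      rw [abs_le]
      constructor <;> nlinarith [hpi.1, hpi.2]
    calc subsetExpect p (insert i S) (fun A => Real.exp (l * F A))
      _ ≤ Real.exp (l ^ 2 * (p i * c i ^ 2)) * subsetExpect p S (fun A => Real.exp (l * G A)) := by
        rw [subsetExpect_insert hi, ← subsetExpect_const_mul]
        exact subsetExpect_mono hpS fun A _ =>
          two_point_mgf_le hpi (hF A i (Finset.mem_insert_self _ _)) hci
      _ ≤ Real.exp (l ^ 2 * (p i * c i ^ 2)) *
            Real.exp (l * subsetExpect p S G + l ^ 2 * ∑ j ∈ S, p j * c j ^ 2) := by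
        gcongr
        exact ih hpS hcS G_lipschitz
      _ = _ := by
        rw [← Real.exp_add, subsetExpect_insert hi, Finset.sum_insert hi, ← hG]
        ring_nf

lemma subsetExpect_exp_sum_le {u : ι → ℝ} {l : ℝ} (hp : ∀ i ∈ S, p i ∈ Set.Icc 0 1)
    (hu : ∀ i ∈ S, l * u i ∈ Set.Icc 0 1) :
    subsetExpect p S (fun A => Real.exp (l * ∑ i ∈ A, u i)) ≤
      Real.exp (2 * l * ∑ i ∈ S, p i * u i) := by
  simp only [Finset.mul_sum, Real.exp_sum, subsetExpect_prod]
  refine Finset.prod_le_prod (fun i hi => ?_) fun i hi => ?_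
  · have := mul_nonneg (hp i hi).1 (Real.exp_pos (l * u i)).le
    linarith [(hp i hi).2]
  · exact (bernoulli_mgf_le (hp i hi) (hu i hi).1 (hu i hi).2).trans_eq (by ring_nf)

lemma subsetProb_add_le_of_abs_insert_sub_le {c : ι → ℝ} {l W m : ℝ} {F : Finset ι → ℝ}
    (hp : ∀ i ∈ S, p i ∈ Set.Icc 0 1) (hl : 0 ≤ l) (hc : ∀ i ∈ S, l * c i ≤ 1)
    (hF : ∀ A, ∀ i ∈ S, |F (insert i A) - F A| ≤ c i)
    (hW : l ^ 2 * ∑ i ∈ S, p i * c i ^ 2 ≤ W) (hm : subsetExpect p S F ≤ m) (t : ℝ) :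
    subsetProb p S (fun A => m + t ≤ F A) ≤ Real.exp (-(l * t) + W) := by
  have mgf := subsetExpect_exp_mul_le hp (by rwa [abs_of_nonneg hl]) hF
  calc subsetProb p S (fun A => m + t ≤ F A)
    _ ≤ Real.exp (-(l * (m + t))) * subsetExpect p S (fun A => Real.exp (l * F A)) :=
      subsetProb_le_exp_mul hp _ (fun A _ => (Real.exp_pos _).le) fun A _ h => by gcongr
    _ ≤ Real.exp (-(l * (m + t))) * Real.exp (l * m + W) := by
      gcongr
      exact mgf.trans (by gcongr)
    _ = Real.exp (-(l * t) + W) := by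
      rw [← Real.exp_add]
      ring_nf

lemma subsetProb_le_sub_of_abs_insert_sub_le {c : ι → ℝ} {l W m : ℝ} {F : Finset ι → ℝ}
    (hp : ∀ i ∈ S, p i ∈ Set.Icc 0 1) (hl : 0 ≤ l) (hc : ∀ i ∈ S, l * c i ≤ 1)
    (hF : ∀ A, ∀ i ∈ S, |F (insert i A) - F A| ≤ c i)
    (hW : l ^ 2 * ∑ i ∈ S, p i * c i ^ 2 ≤ W) (hm : m ≤ subsetExpect p S F) (t : ℝ) :
    subsetProb p S (fun A => F A ≤ m - t) ≤ Real.exp (-(l * t) + W) := by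
  have hF' (A : Finset ι) (i : ι) (hi : i ∈ S) : |-1 * F (insert i A) - -1 * F A| ≤ c i := by
    rw [← mul_sub, abs_mul, abs_neg, abs_one, one_mul]
    exact hF A i hi
  have hm' : subsetExpect p S (fun A => -1 * F A) ≤ -m := by
    rw [subsetExpect_const_mul]
    linarith
  exact (subsetProb_mono hp fun A _ h => by linarith).trans
    (subsetProb_add_le_of_abs_insert_sub_le hp hl hc hF' hW hm' t)

lemma subsetProb_add_le_sum {u : ι → ℝ} {l m : ℝ} (hp : ∀ i ∈ S, p i ∈ Set.Icc 0 1) (hl : 0 ≤ l)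
    (hu : ∀ i ∈ S, l * u i ∈ Set.Icc 0 1) (hm : ∑ i ∈ S, p i * u i ≤ m) (t : ℝ) :
    subsetProb p S (fun A => 2 * m + t ≤ ∑ i ∈ A, u i) ≤ Real.exp (-(l * t)) := by
  calc subsetProb p S (fun A => 2 * m + t ≤ ∑ i ∈ A, u i)
    _ ≤ Real.exp (-(l * (2 * m + t))) *
          subsetExpect p S (fun A => Real.exp (l * ∑ i ∈ A, u i)) :=
      subsetProb_le_exp_mul hp _ (fun A _ => (Real.exp_pos _).le) fun A _ h => by gcongr
    _ ≤ Real.exp (-(l * (2 * m + t))) * Real.exp (2 * l * m) := by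
      gcongr
      exact (subsetExpect_exp_sum_le hp hu).trans (by gcongr)
    _ = Real.exp (-(l * t)) := by
      rw [← Real.exp_add]
      ring_nf

end ExponentialMoments

open scoped Classical in
/-- The total weight `a` of those `j ∈ J` that no element of `A` triggers, `T j g` meaning that `g`
triggers `j`. -/
noncomputable def avoidingSum {ι τ : Type*} (J : Finset τ) (a : τ → ℝ) (T : τ → ι → Prop)
    (A : Finset ι) : ℝ :=
  ∑ j ∈ J with ∀ g ∈ A, ¬ T j g, a j

section AvoidingSum

open scoped Classical

variable {ι τ : Type*} {p : ι → ℝ} {S : Finset ι} {J : Finset τ} {a : τ → ℝ} {T : τ → ι → Prop}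
  {l c W m : ℝ}

lemma abs_avoidingSum_insert_sub_le (ha : ∀ j ∈ J, 0 ≤ a j) (A : Finset ι) (g : ι) :
    |avoidingSum J a T (insert g A) - avoidingSum J a T A| ≤ ∑ j ∈ J with T j g, a j := by
  have lost_subset : {j ∈ J | ∀ h ∈ insert g A, ¬ T j h} ⊆ {j ∈ J | ∀ h ∈ A, ¬ T j h} := by grind
  unfold avoidingSum
  rw [abs_sub_comm, ← Finset.sum_sdiff lost_subset, add_sub_cancel_right,
    abs_of_nonneg (Finset.sum_nonneg fun j hj => ha j (by grind))]
  exact Finset.sum_le_sum_of_subset_of_nonneg (fun j hj => by grind) fun j hj _ =>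
    ha j (Finset.mem_filter.1 hj).1

lemma subsetExpect_avoidingSum :
    subsetExpect p S (avoidingSum J a T) = ∑ j ∈ J, a j * ∏ g ∈ S with T j g, (1 - p g) := by
  have indicator_form (A : Finset ι) (hA : A ⊆ S) : avoidingSum J a T A =
      ∑ j ∈ J, a j * if ∀ g ∈ A, g ∉ S.filter (T j) then 1 else 0 := by
    have (j : τ) : (∀ g ∈ A, g ∉ S.filter (T j)) ↔ ∀ g ∈ A, ¬ T j g :=
      forall₂_congr fun g hg => by simp [hA hg]
    simp only [avoidingSum, Finset.sum_filter, this, mul_ite, mul_one, mul_zero]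
  rw [subsetExpect_congr indicator_form, subsetExpect_sum]
  refine Finset.sum_congr rfl fun j _ => ?_
  rw [subsetExpect_const_mul, ← subsetProb_forall_notMem (Finset.filter_subset _ _), subsetProb]
  congr! 4

lemma sum_mul_sum_filter_comm :
    ∑ g ∈ S, p g * ∑ j ∈ J with T j g, a j = ∑ j ∈ J, a j * ∑ g ∈ S with T j g, p g := by
  simp only [Finset.sum_filter, Finset.mul_sum]
  rw [Finset.sum_comm]
  exact Finset.sum_congr rfl fun j _ => Finset.sum_congr rfl fun g _ => by split_ifs <;> ring

lemma sum_mul_sq_sum_filter_le (hp : ∀ i ∈ S, p i ∈ Set.Icc 0 1) (ha : ∀ j ∈ J, 0 ≤ a j)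
    (hc0 : 0 ≤ c) (hc : ∀ g ∈ S, ∑ j ∈ J with T j g, a j ≤ c)
    (hW : ∑ j ∈ J, a j * ∑ g ∈ S with T j g, p g ≤ W) :
    l ^ 2 * ∑ g ∈ S, p g * (∑ j ∈ J with T j g, a j) ^ 2 ≤ l ^ 2 * (c * W) := by
  gcongr
  calc ∑ g ∈ S, p g * (∑ j ∈ J with T j g, a j) ^ 2
    _ ≤ ∑ g ∈ S, c * (p g * ∑ j ∈ J with T j g, a j) := by
      refine Finset.sum_le_sum fun g hg => ?_
      have : 0 ≤ ∑ j ∈ J with T j g, a j :=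
        Finset.sum_nonneg fun j hj => ha j (Finset.mem_filter.1 hj).1
      nlinarith [mul_le_mul_of_nonneg_right (hc g hg) (mul_nonneg (hp g hg).1 this)]
    _ ≤ c * W := by
      rw [← Finset.mul_sum, sum_mul_sum_filter_comm]
      gcongr

lemma subsetProb_add_le_avoidingSum (hp : ∀ i ∈ S, p i ∈ Set.Icc 0 1) (ha : ∀ j ∈ J, 0 ≤ a j)
    (hl : 0 ≤ l) (hc0 : 0 ≤ c) (hc : ∀ g ∈ S, ∑ j ∈ J with T j g, a j ≤ c) (hlc : l * c ≤ 1)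
    (hW : ∑ j ∈ J, a j * ∑ g ∈ S with T j g, p g ≤ W)
    (hm : ∑ j ∈ J, a j * ∏ g ∈ S with T j g, (1 - p g) ≤ m) (t : ℝ) :
    subsetProb p S (fun A => m + t ≤ avoidingSum J a T A) ≤
      Real.exp (-(l * t) + l ^ 2 * (c * W)) :=
  subsetProb_add_le_of_abs_insert_sub_le hp hl
    (fun g hg => (mul_le_mul_of_nonneg_left (hc g hg) hl).trans hlc)
    (fun A g _ => abs_avoidingSum_insert_sub_le ha A g)
    (sum_mul_sq_sum_filter_le hp ha hc0 hc hW) (subsetExpect_avoidingSum.trans_le hm) t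

lemma subsetProb_avoidingSum_le_sub (hp : ∀ i ∈ S, p i ∈ Set.Icc 0 1) (ha : ∀ j ∈ J, 0 ≤ a j)
    (hl : 0 ≤ l) (hc0 : 0 ≤ c) (hc : ∀ g ∈ S, ∑ j ∈ J with T j g, a j ≤ c) (hlc : l * c ≤ 1)
    (hW : ∑ j ∈ J, a j * ∑ g ∈ S with T j g, p g ≤ W)
    (hm : m ≤ ∑ j ∈ J, a j * ∏ g ∈ S with T j g, (1 - p g)) (t : ℝ) :
    subsetProb p S (fun A => avoidingSum J a T A ≤ m - t) ≤
      Real.exp (-(l * t) + l ^ 2 * (c * W)) :=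
  subsetProb_le_sub_of_abs_insert_sub_le hp hl
    (fun g hg => (mul_le_mul_of_nonneg_left (hc g hg) hl).trans hlc)
    (fun A g _ => abs_avoidingSum_insert_sub_le ha A g)
    (sum_mul_sq_sum_filter_le hp ha hc0 hc hW) (hm.trans_eq subsetExpect_avoidingSum.symm) t

end AvoidingSum

section QuadraticForms

open scoped Classical

lemma compensated_bernoulli_mgf_le {q u : ℝ} (hq : q ∈ Set.Icc 0 1) (hu0 : 0 ≤ u) (hu1 : u ≤ 1)
    (x : ℝ) :
    (1 - q) * Real.exp (x - 2 * q * u) + q * Real.exp (x - 2 * q * u + u) ≤ Real.exp x := by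
  calc (1 - q) * Real.exp (x - 2 * q * u) + q * Real.exp (x - 2 * q * u + u)
    _ = Real.exp (x - 2 * q * u) * (1 - q + q * Real.exp u) := by
      rw [Real.exp_add]
      ring
    _ ≤ Real.exp (x - 2 * q * u) * Real.exp (2 * q * u) := by
      gcongr
      exact bernoulli_mgf_le hq hu0 hu1
    _ = Real.exp x := by rw [← Real.exp_add, sub_add_cancel]

variable {ι : Type*} {p : ι → ℝ} {S : Finset ι}

-- Exposing the elements of `S` one by one, the integrand is a supermartingale: each new element `i`
-- adds at most `∑ j ∈ A, a i j` to `q`, and the compensator pays for it in advance.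
lemma subsetExpect_exp_sub_compensator_le_one {a : ι → ι → ℝ} {q : Finset ι → ℝ}
    {Good : Finset ι → Prop} {l : ℝ} (hp : ∀ i ∈ S, p i ∈ Set.Icc 0 1) (ha : ∀ i j, 0 ≤ a i j)
    (hq0 : q ∅ = 0) (hq : ∀ A, ∀ i ∉ A, q (insert i A) ≤ q A + ∑ j ∈ A, a i j)
    (hGood : ∀ A i, Good (insert i A) → Good A) (hl : 0 ≤ l)
    (hla : ∀ A ⊆ S, Good A → ∀ i ∈ S, l * ∑ j ∈ A, a i j ≤ 1) :
    subsetExpect p S (fun A => if Good A then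
      Real.exp (l * q A - 2 * l * ∑ j ∈ A, ∑ i ∈ S, p i * a i j) else 0) ≤ 1 := by
  induction S using Finset.induction_on with
  | empty => rw [subsetExpect_empty]; split_ifs <;> simp [hq0]
  | insert i S hi ih =>
    obtain ⟨hpi, hpS⟩ := (Finset.forall_mem_insert _ _ _).1 hp
    rw [subsetExpect_insert hi]
    refine (subsetExpect_mono hpS fun A hA => ?_).trans (ih hpS fun A hA hg j hj =>
      hla A (hA.trans (Finset.subset_insert _ _)) hg j (Finset.mem_insert_of_mem hj))
    by_cases good : Good A
    swap
    · simp [good, mt (hGood A i) good]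
    set b := ∑ j ∈ A, a i j with b_def
    have b_nonneg : 0 ≤ b := Finset.sum_nonneg fun j _ => ha i j
    have compensator_insert_left : ∑ j ∈ A, ∑ i' ∈ insert i S, p i' * a i' j =
        ∑ j ∈ A, ∑ i' ∈ S, p i' * a i' j + p i * b := by
      simp only [Finset.sum_insert hi, Finset.sum_add_distrib, ← Finset.mul_sum, b_def]
      ring
    set x := l * q A - 2 * l * ∑ j ∈ A, ∑ i' ∈ S, p i' * a i' j with x_def
    have present : (if Good (insert i A) then Real.exp (l * q (insert i A) -
        2 * l * ∑ j ∈ insert i A, ∑ i' ∈ insert i S, p i' * a i' j) else 0) ≤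
        Real.exp (x - 2 * p i * (l * b) + l * b) := by
      split_ifs
      swap
      · positivity
      have q_insert := mul_le_mul_of_nonneg_left (hq A i fun h => hi (hA h)) hl
      have compensator_insert : 0 ≤ l * ∑ i' ∈ insert i S, p i' * a i' i :=
        mul_nonneg hl (Finset.sum_nonneg fun j hj => mul_nonneg (hp j hj).1 (ha j i))
      rw [Finset.sum_insert fun h => hi (hA h), compensator_insert_left]
      gcongr
      linarith
    rw [if_pos good, if_pos good, compensator_insert_left, show l * q A - 2 * l *
      (∑ j ∈ A, ∑ i' ∈ S, p i' * a i' j + p i * b) = x - 2 * p i * (l * b) by rw [x_def]; ring]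
    refine (add_le_add_right (mul_le_mul_of_nonneg_left present hpi.1) _).trans ?_
    exact compensated_bernoulli_mgf_le hpi (mul_nonneg hl b_nonneg)
      (hla A (hA.trans (Finset.subset_insert _ _)) good i (Finset.mem_insert_self _ _)) x

end QuadraticForms

open scoped Classical in
/-- The sum over the vertices `l` of `A` of `w l` times the degree of `l` in the subgraph of `G`
induced on `A`. -/
noncomputable def weightedDegreeSum {ι : Type*} (G : SimpleGraph ι) (w : ι → ℝ)
    (A : Finset ι) : ℝ :=
  ∑ l ∈ A, ∑ g ∈ A with G.Adj l g, w l

open scoped Classical in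
/-- The contribution of the pair `l, g` to `weightedDegreeSum G w`. -/
noncomputable def adjWeight {ι : Type*} (G : SimpleGraph ι) (w : ι → ℝ) (l g : ι) : ℝ :=
  if G.Adj l g then w l + w g else 0

section WeightedDegreeSum

open scoped Classical

variable {ι : Type*} {p : ι → ℝ} {S B : Finset ι} {G : SimpleGraph ι} {w : ι → ℝ} {d m y : ℝ}

lemma weightedDegreeSum_insert {i : ι} {A : Finset ι} (hi : i ∉ A) :
    weightedDegreeSum G w (insert i A) = weightedDegreeSum G w A + ∑ j ∈ A, adjWeight G w i j := by
  have split_adjWeight (j : ι) : adjWeight G w i j =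
      (if G.Adj i j then w i else 0) + if G.Adj j i then w j else 0 := by
    unfold adjWeight
    simp only [G.adj_comm j i]
    split_ifs <;> simp
  simp only [weightedDegreeSum, Finset.sum_filter, Finset.sum_insert hi, Finset.sum_add_distrib,
    split_adjWeight, G.irrefl, if_false]
  ring

lemma sum_mul_sum_adjWeight (p : ι → ℝ) (S : Finset ι) :
    ∑ g ∈ S, p g * ∑ l ∈ S, p l * adjWeight G w l g =
      2 * ∑ l ∈ S, p l * w l * ∑ g ∈ S with G.Adj l g, p g := by
  have split_adjWeight (l g : ι) : p g * (p l * adjWeight G w l g) =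
      (if G.Adj l g then p l * w l * p g else 0) + if G.Adj g l then p g * w g * p l else 0 := by
    unfold adjWeight
    simp only [G.adj_comm g l]
    split_ifs <;> ring
  rw [two_mul]
  simp only [Finset.mul_sum, split_adjWeight, Finset.sum_add_distrib, Finset.sum_filter, mul_ite,
    mul_zero]
  rw [Finset.sum_comm]

lemma subsetProb_le_card_adj (hp : ∀ i ∈ S, p i ∈ Set.Icc 0 1) {l : ι}
    (hd : ∑ g ∈ S with G.Adj l g, p g ≤ d) (y : ℝ) :
    subsetProb p S (fun A => y ≤ ({g ∈ A | G.Adj l g}.card : ℝ)) ≤ Real.exp (-y + 2 * d) := by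
  have mean : ∑ g ∈ S, p g * (if G.Adj l g then 1 else 0) ≤ d := by
    simpa only [mul_ite, mul_one, mul_zero, ← Finset.sum_filter] using hd
  have tail := subsetProb_add_le_sum (u := fun g => if G.Adj l g then 1 else 0) hp zero_le_one
    (fun g _ => by split_ifs <;> norm_num) mean (y - 2 * d)
  simp only [← Finset.sum_filter, Finset.sum_const, nsmul_eq_mul, mul_one, one_mul,
    add_sub_cancel, neg_sub] at tail
  rwa [neg_add_eq_sub]

lemma adjWeight_nonneg (hw : ∀ l, 0 ≤ w l) (l g : ι) : 0 ≤ adjWeight G w l g := by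
  unfold adjWeight
  split_ifs
  · exact add_nonneg (hw l) (hw g)
  · exact le_rfl

lemma sum_adjWeight_le (hwy : ∀ l ∈ S, w l ≤ 1 / y ^ 2) {A : Finset ι} (hA : A ⊆ S) {l : ι}
    (hl : l ∈ S) : ∑ g ∈ A, adjWeight G w l g ≤ {g ∈ A | G.Adj l g}.card * (2 / y ^ 2) := by
  unfold adjWeight
  rw [← Finset.sum_filter, ← nsmul_eq_mul]
  refine Finset.sum_le_card_nsmul _ _ _ fun g hg => ?_
  rw [show 2 / y ^ 2 = 1 / y ^ 2 + 1 / y ^ 2 by ring]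
  exact add_le_add (hwy l hl) (hwy g (hA (Finset.mem_filter.1 hg).1))

lemma sum_mul_adjWeight_le (hp : ∀ i ∈ S, p i ∈ Set.Icc 0 1) (hwy : ∀ l ∈ S, w l ≤ 1 / y ^ 2)
    {g : ι} (hg : g ∈ S) (hd : ∑ l ∈ S with G.Adj g l, p l ≤ d) :
    ∑ l ∈ S, p l * adjWeight G w l g ≤ d * (2 / y ^ 2) := by
  calc ∑ l ∈ S, p l * adjWeight G w l g
    _ = ∑ l ∈ S with G.Adj g l, p l * (w l + w g) := by
      simp only [adjWeight, Finset.sum_filter, G.adj_comm g, mul_ite, mul_zero]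
    _ ≤ ∑ l ∈ S with G.Adj g l, p l * (2 / y ^ 2) := by
      refine Finset.sum_le_sum fun l hl => ?_
      have hlS := (Finset.mem_filter.1 hl).1
      refine mul_le_mul_of_nonneg_left ?_ (hp l hlS).1
      rw [show 2 / y ^ 2 = 1 / y ^ 2 + 1 / y ^ 2 by ring]
      exact add_le_add (hwy l hlS) (hwy g hg)
    _ ≤ d * (2 / y ^ 2) := by
      rw [← Finset.sum_mul]
      gcongr

lemma subsetProb_add_le_sum_sum_adjWeight (hp : ∀ i ∈ S, p i ∈ Set.Icc 0 1) (hw : ∀ l, 0 ≤ w l)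
    (hwy : ∀ l ∈ S, w l ≤ 1 / y ^ 2) (hy : 0 < y) (hdy : 2 * d ≤ y)
    (hd : ∀ l ∈ S, ∑ g ∈ S with G.Adj l g, p g ≤ d) (hd0 : 0 ≤ d) (hm : ∑ l ∈ S, p l * w l ≤ m)
    (t : ℝ) :
    subsetProb p S (fun A => 4 * (m * d) + t ≤ ∑ g ∈ A, ∑ l ∈ S, p l * adjWeight G w l g) ≤
      Real.exp (-(y * t)) := by
  have mean : ∑ g ∈ S, p g * ∑ l ∈ S, p l * adjWeight G w l g ≤ 2 * (m * d) := by
    rw [sum_mul_sum_adjWeight]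
    gcongr
    refine (Finset.sum_le_sum fun l hl => mul_le_mul_of_nonneg_left (hd l hl)
      (mul_nonneg (hp l hl).1 (hw l))).trans ?_
    rw [← Finset.sum_mul]
    gcongr
  have bounded (g : ι) (hg : g ∈ S) : y * ∑ l ∈ S, p l * adjWeight G w l g ∈ Set.Icc 0 1 := by
    constructor
    · exact mul_nonneg hy.le (Finset.sum_nonneg fun l hl =>
        mul_nonneg (hp l hl).1 (adjWeight_nonneg hw l g))
    · calc y * ∑ l ∈ S, p l * adjWeight G w l g
        _ ≤ y * (d * (2 / y ^ 2)) := by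
          gcongr
          exact sum_mul_adjWeight_le hp hwy hg (hd g hg)
        _ = 2 * d / y := by field_simp
        _ ≤ 1 := (div_le_one hy).2 hdy
  convert subsetProb_add_le_sum hp hy.le bounded mean t using 4
  ring

-- `weightedDegreeSum` is compared with twice its compensator, on the event that every element of
-- `B` has at most `y` active neighbours.
lemma subsetProb_forall_card_adj_le_and_le_weightedDegreeSum_sub (hp : ∀ i ∈ S, p i ∈ Set.Icc 0 1)
    (hw : ∀ l, 0 ≤ w l) (hwy : ∀ l ∈ S, w l ≤ 1 / y ^ 2) (hy : 0 < y)
    (hB : ∀ l ∈ S, ∀ g ∈ S, adjWeight G w l g ≠ 0 → l ∈ B) (t : ℝ) :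
    subsetProb p S (fun A => (∀ l ∈ B, ({g ∈ A | G.Adj l g}.card : ℝ) ≤ y) ∧
        t ≤ weightedDegreeSum G w A - 2 * ∑ g ∈ A, ∑ l ∈ S, p l * adjWeight G w l g) ≤
      Real.exp (-(y / 2 * t)) := by
  set Good : Finset ι → Prop := fun A => ∀ l ∈ B, ({g ∈ A | G.Adj l g}.card : ℝ) ≤ y
  have increment_le (A : Finset ι) (hA : A ⊆ S) (good : Good A) (l : ι) (hl : l ∈ S) :
      y / 2 * ∑ g ∈ A, adjWeight G w l g ≤ 1 := by
    by_cases hlB : l ∈ B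
    · calc y / 2 * ∑ g ∈ A, adjWeight G w l g
        _ ≤ y / 2 * (y * (2 / y ^ 2)) := by
          gcongr
          exact (sum_adjWeight_le hwy hA hl).trans (by gcongr; exact good l hlB)
        _ = 1 := by field_simp
    · rw [Finset.sum_eq_zero fun g hg => by_contra fun h => hlB (hB l hl g (hA hg) h), mul_zero]
      exact zero_le_one
  have mgf := subsetExpect_exp_sub_compensator_le_one (q := weightedDegreeSum G w) (Good := Good)
    hp (adjWeight_nonneg hw) (by simp [weightedDegreeSum])
    (fun A i hi => (weightedDegreeSum_insert hi).le)
    (fun A i good l hl => le_trans (by gcongr; simp) (good l hl))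
    (by positivity : 0 ≤ y / 2) increment_le
  refine (subsetProb_le_exp_mul hp (y / 2 * t) (fun A _ => ?_) fun A _ h => ?_).trans
    (mul_le_of_le_one_right (Real.exp_pos _).le mgf)
  · split_ifs <;> positivity
  · rw [if_pos h.1]
    gcongr
    exact (mul_le_mul_of_nonneg_left h.2 (by positivity)).trans_eq (by ring)

lemma subsetProb_add_le_weightedDegreeSum (hp : ∀ i ∈ S, p i ∈ Set.Icc 0 1) (hw : ∀ l, 0 ≤ w l)
    (hwy : ∀ l ∈ S, w l ≤ 1 / y ^ 2) (hy : 0 < y) (hdy : 2 * d ≤ y)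
    (hd : ∀ l ∈ S, ∑ g ∈ S with G.Adj l g, p g ≤ d) (hd0 : 0 ≤ d) (hm : ∑ l ∈ S, p l * w l ≤ m)
    (hBS : B ⊆ S) (hB : ∀ l ∈ S, ∀ g ∈ S, adjWeight G w l g ≠ 0 → l ∈ B) (t : ℝ) :
    subsetProb p S (fun A => 8 * (m * d) + 3 * t ≤ weightedDegreeSum G w A) ≤
      B.card * Real.exp (-y + 2 * d) + Real.exp (-(y * t)) + Real.exp (-(y / 2 * t)) := by
  set LargeDegree : Finset ι → Prop := fun A => ∃ l ∈ B, y ≤ ({g ∈ A | G.Adj l g}.card : ℝ)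
  set LargeCompensator : Finset ι → Prop := fun A =>
    4 * (m * d) + t ≤ ∑ g ∈ A, ∑ l ∈ S, p l * adjWeight G w l g
  set LargeDeviation : Finset ι → Prop := fun A =>
    (∀ l ∈ B, ({g ∈ A | G.Adj l g}.card : ℝ) ≤ y) ∧
      t ≤ weightedDegreeSum G w A - 2 * ∑ g ∈ A, ∑ l ∈ S, p l * adjWeight G w l g
  have degree_le : subsetProb p S LargeDegree ≤ B.card * Real.exp (-y + 2 * d) := by
    refine (subsetProb_exists_le hp B _).trans ?_
    rw [← nsmul_eq_mul]
    exact Finset.sum_le_card_nsmul _ _ _ fun l hl => subsetProb_le_card_adj hp (hd l (hBS hl)) y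
  calc subsetProb p S (fun A => 8 * (m * d) + 3 * t ≤ weightedDegreeSum G w A)
    _ ≤ subsetProb p S (fun A => (LargeDegree A ∨ LargeCompensator A) ∨ LargeDeviation A) := by
      refine subsetProb_mono hp fun A _ h => or_iff_not_imp_left.2 fun small => ?_
      obtain ⟨small_degree, small_compensator⟩ := not_or.1 small
      refine ⟨fun l hl => le_of_not_ge fun h => small_degree ⟨l, hl, h⟩, ?_⟩
      have := not_le.1 small_compensator
      linarith
    _ ≤ subsetProb p S LargeDegree + subsetProb p S LargeCompensator +
          subsetProb p S LargeDeviation :=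
      (subsetProb_or_le hp).trans (add_le_add_left (subsetProb_or_le hp) _)
    _ ≤ _ := by
      gcongr
      · exact subsetProb_add_le_sum_sum_adjWeight hp hw hwy hy hdy hd hd0 hm t
      · exact subsetProb_forall_card_adj_le_and_le_weightedDegreeSum_sub hp hw hwy hy hB t

end WeightedDegreeSum

/-! ### Independent transversals by weighted counting -/

section IndependentTransversals

open scoped Classical

/-- The independent sets of `G` inside `S` that contain exactly one element of the fibre of `π` over
each `e ∈ F`, and nothing else: the partial colourings that colour exactly the edges in `F`. -/
noncomputable def partialTransversals {ι β : Type*} (π : ι → β) (G : SimpleGraph ι) (S : Finset ι)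
    (F : Finset β) : Finset (Finset ι) :=
  {A ∈ S.powerset | G.IsIndepSet (A : Set ι) ∧ Set.InjOn π A ∧ A.image π = F}

/-- The total weight of the partial transversals over `F`, a transversal being weighted by the
product of the weights of its elements. -/
noncomputable def transversalWeight {ι β : Type*} (π : ι → β) (G : SimpleGraph ι) (S : Finset ι)
    (μ : ι → ℝ) (F : Finset β) : ℝ :=
  ∑ A ∈ partialTransversals π G S F, ∏ i ∈ A, μ i

/-- Some independent set of `G` inside `S` meets every fibre of `π : S → β`. Repeated elements of a
fibre are harmless, as they can be discarded. -/
def HasIndepTransversal {ι β : Type*} (π : ι → β) (G : SimpleGraph ι) (S : Finset ι) : Prop :=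
  ∃ A ⊆ S, G.IsIndepSet (A : Set ι) ∧ ∀ i ∈ S, ∃ j ∈ A, π j = π i

variable {ι β : Type*} {π : ι → β} {G : SimpleGraph ι} {S A : Finset ι} {μ : ι → ℝ} {F : Finset β}
  {ρ : ℝ}

lemma mem_partialTransversals : A ∈ partialTransversals π G S F ↔
    A ⊆ S ∧ G.IsIndepSet (A : Set ι) ∧ Set.InjOn π A ∧ A.image π = F := by
  rw [partialTransversals, Finset.mem_filter, Finset.mem_powerset]

lemma erase_mem_partialTransversals (hA : A ∈ partialTransversals π G S F) {j : ι} (hj : j ∈ A) :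
    A.erase j ∈ partialTransversals π G S (F.erase (π j)) := by
  obtain ⟨subset, indep, inj, rfl⟩ := mem_partialTransversals.1 hA
  have erase_subset := A.erase_subset j
  refine mem_partialTransversals.2 ⟨erase_subset.trans subset, indep.mono erase_subset,
    inj.mono erase_subset, ?_⟩
  ext e
  simp only [Finset.mem_image, Finset.mem_erase]
  constructor
  · rintro ⟨a, ⟨ha, haA⟩, rfl⟩
    exact ⟨fun h => ha (inj haA hj h), a, haA, rfl⟩
  · rintro ⟨he, a, haA, rfl⟩
    exact ⟨a, ⟨fun h => he (h ▸ rfl), haA⟩, rfl⟩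

lemma notMem_of_mem_partialTransversals (hA : A ∈ partialTransversals π G S F) {i : ι}
    (hi : π i ∉ F) : i ∉ A :=
  fun h => hi ((mem_partialTransversals.1 hA).2.2.2 ▸ Finset.mem_image_of_mem π h)

lemma insert_mem_partialTransversals (hA : A ∈ partialTransversals π G S F) {i : ι} (hiS : i ∈ S)
    (hi : π i ∉ F) (hadj : ∀ j ∈ A, ¬ G.Adj i j) :
    insert i A ∈ partialTransversals π G S (insert (π i) F) := by
  have hiA := notMem_of_mem_partialTransversals hA hi
  obtain ⟨subset, indep, inj, rfl⟩ := mem_partialTransversals.1 hA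
  refine mem_partialTransversals.2 ⟨Finset.insert_subset hiS subset, ?_, ?_, Finset.image_insert ..⟩
  · rw [Finset.coe_insert, SimpleGraph.isIndepSet_iff]
    exact Set.pairwise_insert.2 ⟨indep, fun j hj _ => ⟨hadj j hj, fun h => hadj j hj h.symm⟩⟩
  · rw [Finset.coe_insert]
    exact (Set.injOn_insert (by simpa using hiA)).2 ⟨inj, by simpa using hi⟩

lemma prod_nonneg_of_mem_partialTransversals (hμ : ∀ i ∈ S, 0 ≤ μ i)
    (hA : A ∈ partialTransversals π G S F) : 0 ≤ ∏ i ∈ A, μ i :=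
  Finset.prod_nonneg fun i hi => hμ i ((mem_partialTransversals.1 hA).1 hi)

lemma transversalWeight_nonneg (hμ : ∀ i ∈ S, 0 ≤ μ i) : 0 ≤ transversalWeight π G S μ F :=
  Finset.sum_nonneg fun _ hA => prod_nonneg_of_mem_partialTransversals hμ hA

lemma sum_comp_le_sum_of_injOn {α γ : Type*} {s : Finset α} {t : Finset γ} {φ : α → γ} {g : γ → ℝ}
    (hφ : Set.MapsTo φ s t) (hinj : Set.InjOn φ s) (hg : ∀ b ∈ t, 0 ≤ g b) :
    ∑ a ∈ s, g (φ a) ≤ ∑ b ∈ t, g b := by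
  rw [← Finset.sum_image hinj]
  exact Finset.sum_le_sum_of_subset_of_nonneg (Finset.image_subset_iff.2 hφ) fun b hb _ => hg b hb

lemma sum_partialTransversals_mem_le (hμ : ∀ i ∈ S, 0 ≤ μ i) {j : ι} (hj : j ∈ S) :
    ∑ A ∈ partialTransversals π G S F with j ∈ A, ∏ i ∈ A, μ i ≤
      μ j * transversalWeight π G S μ (F.erase (π j)) := by
  calc ∑ A ∈ partialTransversals π G S F with j ∈ A, ∏ i ∈ A, μ i
    _ = ∑ A ∈ partialTransversals π G S F with j ∈ A, μ j * ∏ i ∈ A.erase j, μ i :=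
      Finset.sum_congr rfl fun A hA => (Finset.mul_prod_erase A μ (Finset.mem_filter.1 hA).2).symm
    _ ≤ μ j * transversalWeight π G S μ (F.erase (π j)) := by
      rw [← Finset.mul_sum]
      refine mul_le_mul_of_nonneg_left (sum_comp_le_sum_of_injOn (fun A hA => ?_) ?_
        fun A hA => prod_nonneg_of_mem_partialTransversals hμ hA) (hμ j hj)
      · rw [Finset.mem_coe, Finset.mem_filter] at hA
        exact erase_mem_partialTransversals hA.1 hA.2
      · exact (Finset.erase_injOn' j).mono fun A hA => (Finset.mem_filter.1 hA).2

lemma sum_mul_sum_partialTransversals_le (hμ : ∀ i ∈ S, 0 ≤ μ i) {e : β} (he : e ∉ F) :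
    ∑ i ∈ S with π i = e,
        μ i * ∑ A ∈ partialTransversals π G S F with ∀ j ∈ A, ¬ G.Adj i j, ∏ j ∈ A, μ j ≤
      transversalWeight π G S μ (insert e F) := by
  set extensions := (S.filter fun i => π i = e).sigma fun i =>
    (partialTransversals π G S F).filter fun A => ∀ j ∈ A, ¬ G.Adj i j with extensions_def
  have mem_extensions (x : (_ : ι) × Finset ι) (hx : x ∈ extensions) : x.1 ∈ S ∧ π x.1 = e ∧
      x.2 ∈ partialTransversals π G S F ∧ ∀ j ∈ x.2, ¬ G.Adj x.1 j := by
    simpa [extensions_def, and_assoc] using hx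
  have fst_notMem (x y) (hx : x ∈ extensions) (hy : y ∈ extensions) : x.1 ∉ y.2 :=
    notMem_of_mem_partialTransversals (mem_extensions y hy).2.2.1
      ((mem_extensions x hx).2.1 ▸ he)
  calc ∑ i ∈ S with π i = e,
        μ i * ∑ A ∈ partialTransversals π G S F with ∀ j ∈ A, ¬ G.Adj i j, ∏ j ∈ A, μ j
    _ = ∑ x ∈ extensions, ∏ j ∈ insert x.1 x.2, μ j := by
      simp only [Finset.mul_sum]
      rw [Finset.sum_sigma']
      exact Finset.sum_congr rfl fun x hx => (Finset.prod_insert (fst_notMem x x hx hx)).symm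
    _ ≤ transversalWeight π G S μ (insert e F) := by
      refine sum_comp_le_sum_of_injOn (fun x hx => ?_) ?_
        fun A hA => prod_nonneg_of_mem_partialTransversals hμ hA
      · obtain ⟨hS, rfl, hA, hadj⟩ := mem_extensions x hx
        exact insert_mem_partialTransversals hA hS he hadj
      · rintro x hx y hy (h : insert x.1 x.2 = insert y.1 y.2)
        have fst_eq : x.1 = y.1 := (Finset.mem_insert.1 (h ▸ Finset.mem_insert_self x.1 x.2))
          |>.resolve_right (fst_notMem x y hx hy)
        refine Sigma.ext fst_eq (heq_of_eq ?_)
        rw [← Finset.erase_insert (fst_notMem x x hx hx), h, fst_eq,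
          Finset.erase_insert (fst_notMem y y hy hy)]

lemma transversalWeight_le_add_sum (hμ : ∀ i ∈ S, 0 ≤ μ i) (i : ι) :
    transversalWeight π G S μ F ≤
      ∑ A ∈ partialTransversals π G S F with ∀ j ∈ A, ¬ G.Adj i j, ∏ j ∈ A, μ j +
        ∑ j ∈ S with G.Adj i j, ∑ A ∈ partialTransversals π G S F with j ∈ A, ∏ l ∈ A, μ l := by
  rw [transversalWeight, ← Finset.sum_filter_add_sum_filter_not _ fun A => ∀ j ∈ A, ¬ G.Adj i j]
  gcongr
  have contribution_nonneg (A) (hA : A ∈ partialTransversals π G S F) (j : ι) :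
      0 ≤ if j ∈ A then ∏ l ∈ A, μ l else 0 := by
    split_ifs
    exacts [prod_nonneg_of_mem_partialTransversals hμ hA, le_rfl]
  calc ∑ A ∈ partialTransversals π G S F with ¬ ∀ j ∈ A, ¬ G.Adj i j, ∏ j ∈ A, μ j
    _ ≤ ∑ A ∈ partialTransversals π G S F with ¬ ∀ j ∈ A, ¬ G.Adj i j,
          ∑ j ∈ S with G.Adj i j, if j ∈ A then ∏ l ∈ A, μ l else 0 := by
      refine Finset.sum_le_sum fun A hA => ?_
      obtain ⟨hA, blocked⟩ := Finset.mem_filter.1 hA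
      push Not at blocked
      obtain ⟨j, hjA, hij⟩ := blocked
      have hj : j ∈ S.filter (G.Adj i) :=
        Finset.mem_filter.2 ⟨(mem_partialTransversals.1 hA).1 hjA, hij⟩
      exact (if_pos hjA).ge.trans
        (Finset.single_le_sum (fun l _ => contribution_nonneg A hA l) hj)
    _ ≤ ∑ A ∈ partialTransversals π G S F,
          ∑ j ∈ S with G.Adj i j, if j ∈ A then ∏ l ∈ A, μ l else 0 :=
      Finset.sum_le_sum_of_subset_of_nonneg (Finset.filter_subset _ _) fun A hA _ =>
        Finset.sum_nonneg fun j _ => contribution_nonneg A hA j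
    _ = _ := by
      rw [Finset.sum_comm]
      simp only [Finset.sum_filter]

lemma sum_partialTransversals_mem_le_of_erase (hμ : ∀ i ∈ S, 0 ≤ μ i) (hρ : 0 < ρ) {j : ι}
    (hj : j ∈ S) (herase : π j ∈ F → ρ / 2 * transversalWeight π G S μ (F.erase (π j)) ≤
      transversalWeight π G S μ F) :
    ∑ A ∈ partialTransversals π G S F with j ∈ A, ∏ i ∈ A, μ i ≤
      μ j * (2 / ρ * transversalWeight π G S μ F) := by
  have weight_nonneg : 0 ≤ transversalWeight π G S μ F := transversalWeight_nonneg hμ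
  by_cases hjF : π j ∈ F
  · refine (sum_partialTransversals_mem_le hμ hj).trans (mul_le_mul_of_nonneg_left ?_ (hμ j hj))
    rw [div_mul_eq_mul_div, le_div_iff₀ hρ]
    linarith [herase hjF]
  · rw [Finset.filter_false_of_mem fun A hA => notMem_of_mem_partialTransversals hA hjF,
      Finset.sum_empty]
    have := hμ j hj
    positivity

-- Rosenfeld's counting argument: each partial transversal over `F` has, on weighted average, at
-- least `ρ / 2` extensions to one more fibre.
lemma half_mul_transversalWeight_le (hμ : ∀ i ∈ S, 0 ≤ μ i) (hρ : 0 < ρ)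
    (hlist : ∀ e ∈ S.image π, ρ ≤ ∑ i ∈ S with π i = e, μ i)
    (hadj : ∀ i ∈ S, ∑ j ∈ S with G.Adj i j, μ j ≤ ρ / 4) (hF : F ⊆ S.image π) {e : β}
    (he : e ∈ S.image π) (heF : e ∉ F) :
    ρ / 2 * transversalWeight π G S μ F ≤ transversalWeight π G S μ (insert e F) := by
  induction F using Finset.strongInduction generalizing e with
  | H F ih =>
    set C := transversalWeight π G S μ F
    have C_nonneg : 0 ≤ C := transversalWeight_nonneg hμ
    have containing_le (j : ι) (hj : j ∈ S) :
        ∑ A ∈ partialTransversals π G S F with j ∈ A, ∏ i ∈ A, μ i ≤ μ j * (2 / ρ * C) := by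
      refine sum_partialTransversals_mem_le_of_erase hμ hρ hj fun hjF => ?_
      have erase_le := ih (F.erase (π j)) (Finset.erase_ssubset hjF)
        ((Finset.erase_subset _ _).trans hF) (hF hjF) (Finset.notMem_erase _ _)
      rwa [Finset.insert_erase hjF] at erase_le
    have avoiding_ge (i : ι) (hi : i ∈ S) : 1 / 2 * C ≤
        ∑ A ∈ partialTransversals π G S F with ∀ j ∈ A, ¬ G.Adj i j, ∏ j ∈ A, μ j := by
      have blocked_le : ∑ j ∈ S with G.Adj i j,
          ∑ A ∈ partialTransversals π G S F with j ∈ A, ∏ l ∈ A, μ l ≤ 1 / 2 * C := by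
        calc _ ≤ ∑ j ∈ S with G.Adj i j, μ j * (2 / ρ * C) :=
              Finset.sum_le_sum fun j hj => containing_le j (Finset.mem_filter.1 hj).1
          _ ≤ ρ / 4 * (2 / ρ * C) := by
              rw [← Finset.sum_mul]
              exact mul_le_mul_of_nonneg_right (hadj i hi) (by positivity)
          _ = 1 / 2 * C := by field_simp; norm_num
      have : C ≤ _ := transversalWeight_le_add_sum hμ i
      linarith
    calc ρ / 2 * C
      _ ≤ (∑ i ∈ S with π i = e, μ i) * (1 / 2 * C) := by
        have := mul_le_mul_of_nonneg_right (hlist e he) (by positivity : 0 ≤ 1 / 2 * C)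
        linarith
      _ ≤ ∑ i ∈ S with π i = e,
            μ i * ∑ A ∈ partialTransversals π G S F with ∀ j ∈ A, ¬ G.Adj i j, ∏ j ∈ A, μ j := by
        rw [Finset.sum_mul]
        refine Finset.sum_le_sum fun i hi => ?_
        have hiS := (Finset.mem_filter.1 hi).1
        exact mul_le_mul_of_nonneg_left (avoiding_ge i hiS) (hμ i hiS)
      _ ≤ transversalWeight π G S μ (insert e F) := sum_mul_sum_partialTransversals_le hμ heF

theorem hasIndepTransversal_of_sum_adj_le (hμ : ∀ i ∈ S, 0 ≤ μ i) (hρ : 0 < ρ)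
    (hlist : ∀ i ∈ S, ρ ≤ ∑ j ∈ S with π j = π i, μ j)
    (hadj : ∀ i ∈ S, ∑ j ∈ S with G.Adj i j, μ j ≤ ρ / 4) : HasIndepTransversal π G S := by
  have weight_pos : 0 < transversalWeight π G S μ (S.image π) := by
    refine Finset.induction_on' (motive := fun F => 0 < transversalWeight π G S μ F) (S.image π) ?_
      fun e F he hF heF ih => (mul_pos (half_pos hρ) ih).trans_le <|
        half_mul_transversalWeight_le hμ hρ (Finset.forall_mem_image.2 hlist) hadj hF he heF
    have : partialTransversals π G S ∅ = {∅} := by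
      ext A
      rw [mem_partialTransversals, Finset.image_eq_empty, Finset.mem_singleton]
      constructor
      · exact fun h => h.2.2.2
      · rintro rfl
        simp
    simp [transversalWeight, this]
  obtain ⟨A, hA, -⟩ := Finset.exists_ne_zero_of_sum_ne_zero weight_pos.ne'
  obtain ⟨subset, indep, -, image_eq⟩ := mem_partialTransversals.1 hA
  refine ⟨A, subset, indep, fun i hi => ?_⟩
  exact Finset.mem_image.1 (image_eq ▸ Finset.mem_image_of_mem π hi)

end IndependentTransversals

/-! ### Weighted list systems -/

section ProductBounds

variable {ι : Type*} {s : Finset ι} {p : ι → ℝ} {q h : ℝ}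

lemma exp_neg_mul_le_one_sub (hq0 : 0 ≤ q) (hqh : q ≤ h) (hh : h ≤ 1 / 2) :
    Real.exp (-(q * (1 + 2 * h))) ≤ 1 - q := by
  have one_sub_pos : 0 < 1 - q := by linarith
  have div_le : q / (1 - q) ≤ q * (1 + 2 * h) := by
    rw [div_le_iff₀ one_sub_pos]
    nlinarith [mul_nonneg hq0 (show 0 ≤ (1 + 2 * h) * (1 - q) - 1 by nlinarith)]
  rw [Real.exp_neg, inv_le_comm₀ (Real.exp_pos _) one_sub_pos]
  calc (1 - q)⁻¹
    _ = q / (1 - q) + 1 := by field_simp; ring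
    _ ≤ Real.exp (q / (1 - q)) := Real.add_one_le_exp _
    _ ≤ Real.exp (q * (1 + 2 * h)) := Real.exp_le_exp.2 div_le

lemma exp_neg_mul_sum_le_prod_one_sub (hp0 : ∀ i ∈ s, 0 ≤ p i) (hp : ∀ i ∈ s, p i ≤ h)
    (hh : h ≤ 1 / 2) : Real.exp (-((∑ i ∈ s, p i) * (1 + 2 * h))) ≤ ∏ i ∈ s, (1 - p i) := by
  rw [Finset.sum_mul, ← Finset.sum_neg_distrib, Real.exp_sum]
  exact Finset.prod_le_prod (fun i _ => (Real.exp_pos _).le)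
    fun i hi => exp_neg_mul_le_one_sub (hp0 i hi) (hp i hi) hh

lemma prod_one_sub_le_exp_neg_sum (hp : ∀ i ∈ s, p i ≤ 1) :
    ∏ i ∈ s, (1 - p i) ≤ Real.exp (-∑ i ∈ s, p i) := by
  rw [← Finset.sum_neg_distrib, Real.exp_sum]
  exact Finset.prod_le_prod (fun i hi => sub_nonneg.2 (hp i hi))
    fun i _ => Real.one_sub_le_exp_neg _

end ProductBounds

/-- The conflict graph of an edge correspondence on a linear hypergraph with edges of size at most
`k`, seen abstractly: a vertex `i` of `G` is a coloured edge, `π i` is the edge carrying the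
colour, and `G` joins two coloured edges that block each other. -/
structure IsBlockingSystem {ι V : Type*} (k : ℕ) (π : ι → Finset V) (G : SimpleGraph ι) :
    Prop where
  ne_of_adj : ∀ {i j}, G.Adj i j → π i ≠ π j
  exists_mem_of_adj : ∀ {i j}, G.Adj i j → ∃ v ∈ π i, v ∈ π j
  eq_of_adj : ∀ {i j j'}, G.Adj i j → G.Adj i j' → π j = π j' → j = j'
  eq_of_mem : ∀ {i j u v}, π i ≠ π j → u ∈ π i → u ∈ π j → v ∈ π i → v ∈ π j → u = v
  card_le : ∀ i, (π i).card ≤ k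

open scoped Classical in
/-- The colour neighbourhood `N(e, v, c)` of the coloured edge `i = (e, c)` inside `S`. -/
noncomputable def colourNbhd {ι V : Type*} (π : ι → Finset V) (G : SimpleGraph ι) (S : Finset ι)
    (i : ι) (v : V) : Finset ι :=
  {j ∈ S | G.Adj i j ∧ v ∈ π j}

open scoped Classical in
/-- Weighted lists for which every edge carrying a colour of `S` has list weight at least `ρ` and
every colour neighbourhood has weight at most `1`; the single weights are at most `1 / y ^ 2`. -/
structure IsWeightedListSystem {ι V : Type*} (k : ℕ) (π : ι → Finset V) (G : SimpleGraph ι)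
    (S : Finset ι) (μ : ι → ℝ) (ρ y : ℝ) : Prop extends IsBlockingSystem k π G where
  nonneg : ∀ i ∈ S, 0 ≤ μ i
  le_inv_sq : ∀ i ∈ S, μ i ≤ 1 / y ^ 2
  le_list : ∀ i ∈ S, ρ ≤ ∑ j ∈ S with π j = π i, μ j
  nbhd_le : ∀ i ∈ S, ∀ v ∈ π i, ∑ j ∈ colourNbhd π G S i v, μ j ≤ 1

section Lists

open scoped Classical

variable {ι V β : Type*} {k : ℕ} {G : SimpleGraph ι} {S S' : Finset ι} {μ : ι → ℝ} {ρ y : ℝ}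

lemma colourNbhd_subset (π : ι → Finset V) (i : ι) (v : V) : colourNbhd π G S i v ⊆ S :=
  Finset.filter_subset _ _

lemma IsBlockingSystem.card_filter_colourNbhd_le_one {π : ι → Finset V}
    (h : IsBlockingSystem k π G) (i l : ι) (v : V) :
    ((colourNbhd π G S i v).filter fun j => π l = π j).card ≤ 1 := by
  refine Finset.card_le_one.2 fun a ha b hb => ?_
  simp only [colourNbhd, Finset.mem_filter] at ha hb
  exact h.eq_of_adj ha.1.2.1 hb.1.2.1 (ha.2.symm.trans hb.2)

lemma IsWeightedListSystem.sum_adj_le {π : ι → Finset V}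
    (h : IsWeightedListSystem k π G S μ ρ y) {i : ι} (hi : i ∈ S) :
    ∑ j ∈ S with G.Adj i j, μ j ≤ k := by
  calc ∑ j ∈ S with G.Adj i j, μ j
    _ ≤ ∑ j ∈ S with G.Adj i j, ∑ v ∈ π i with v ∈ π j, μ j := by
      refine Finset.sum_le_sum fun j hj => ?_
      obtain ⟨hjS, hij⟩ := Finset.mem_filter.1 hj
      obtain ⟨v, hvi, hvj⟩ := h.exists_mem_of_adj hij
      exact Finset.single_le_sum (f := fun _ => μ j) (fun _ _ => h.nonneg j hjS)
        (Finset.mem_filter.2 ⟨hvi, hvj⟩)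
    _ = ∑ v ∈ π i, ∑ j ∈ colourNbhd π G S i v, μ j :=
      Finset.sum_comm' fun j v => by simp only [colourNbhd, Finset.mem_filter]; tauto
    _ ≤ ∑ v ∈ π i, 1 := Finset.sum_le_sum (h.nbhd_le i hi)
    _ ≤ k := by simpa using h.card_le i

lemma exists_subset_le_sum_le_two_mul (hρ : 0 ≤ ρ) (hμ : ∀ i ∈ S, μ i ≤ ρ)
    (hS : ρ ≤ ∑ i ∈ S, μ i) : ∃ S' ⊆ S, ρ ≤ ∑ i ∈ S', μ i ∧ ∑ i ∈ S', μ i ≤ 2 * ρ := by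
  induction S using Finset.induction_on with
  | empty => exact ⟨∅, subset_rfl, hS, by simpa using hρ⟩
  | insert i S hi ih =>
    by_cases large : ρ ≤ ∑ i ∈ S, μ i
    · obtain ⟨S', hS', bounds⟩ := ih (fun j hj => hμ j (Finset.mem_insert_of_mem hj)) large
      exact ⟨S', hS'.trans (Finset.subset_insert _ _), bounds⟩
    · refine ⟨insert i S, subset_rfl, hS, ?_⟩
      rw [Finset.sum_insert hi]
      linarith [hμ i (Finset.mem_insert_self _ _)]

lemma exists_subset_fibre_sum_le_two_mul [DecidableEq β] {π : ι → β} (hρ : 0 ≤ ρ)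
    (hμ : ∀ i ∈ S, μ i ≤ ρ) (hlist : ∀ i ∈ S, ρ ≤ ∑ j ∈ S with π j = π i, μ j) :
    ∃ S' ⊆ S, ∀ i ∈ S, ρ ≤ ∑ j ∈ S' with π j = π i, μ j ∧
      ∑ j ∈ S' with π j = π i, μ j ≤ 2 * ρ := by
  have trimmed_fibre (e : β) : ∃ t ⊆ {j ∈ S | π j = e},
      e ∈ S.image π → ρ ≤ ∑ i ∈ t, μ i ∧ ∑ i ∈ t, μ i ≤ 2 * ρ := by
    by_cases he : e ∈ S.image π
    · obtain ⟨i, hi, rfl⟩ := Finset.mem_image.1 he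
      obtain ⟨t, ht, bounds⟩ := exists_subset_le_sum_le_two_mul hρ
        (fun j hj => hμ j (Finset.mem_filter.1 hj).1) (hlist i hi)
      exact ⟨t, ht, fun _ => bounds⟩
    · exact ⟨∅, by simp, fun h => absurd h he⟩
  choose t ht bounds using trimmed_fibre
  refine ⟨{j ∈ S | j ∈ t (π j)}, Finset.filter_subset _ _, fun i hi => ?_⟩
  have fibre_eq : {j ∈ {j ∈ S | j ∈ t (π j)} | π j = π i} = t (π i) := by
    ext j
    have := @ht (π i) j
    grind
  rw [fibre_eq]
  exact bounds _ (Finset.mem_image_of_mem π hi)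

lemma HasIndepTransversal.of_subset {π : ι → β} (h : HasIndepTransversal π G S') (hS : S' ⊆ S)
    (hmeet : ∀ i ∈ S, ∃ j ∈ S', π j = π i) : HasIndepTransversal π G S := by
  obtain ⟨A, hA, indep, meets⟩ := h
  refine ⟨A, hA.trans hS, indep, fun i hi => ?_⟩
  obtain ⟨j, hj, hji⟩ := hmeet i hi
  obtain ⟨a, ha, haj⟩ := meets j hj
  exact ⟨a, ha, haj.trans hji⟩

end Lists

/-! ### One nibble -/

open scoped Classical in
/-- The hypotheses of one nibble, in which every coloured edge `i` is activated with probability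
`θ * μ i`: lists have weight between `ρ` and `2 * ρ`. -/
structure IsNibble {ι V : Type*} (k : ℕ) (π : ι → Finset V) (G : SimpleGraph ι) (S : Finset ι)
    (μ : ι → ℝ) (ρ y θ : ℝ) : Prop extends IsWeightedListSystem k π G S μ ρ y where
  list_le : ∀ i ∈ S, ∑ j ∈ S with π j = π i, μ j ≤ 2 * ρ
  add_one_le : k + 1 ≤ y
  rate_nonneg : 0 ≤ θ
  rate_le : θ ≤ 1 / 2

open scoped Classical in
/-- The weight of `j` after rescaling by an equalizing factor, which makes up for the difference
between the conflict weight of `j` and its maximum `k`: up to second order in `θ`, all coloured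
edges then lose the same proportion of their weight to activated neighbours. -/
noncomputable def equalizedWeight {ι : Type*} (k : ℕ) (G : SimpleGraph ι) (S : Finset ι)
    (μ : ι → ℝ) (θ : ℝ) (j : ι) : ℝ :=
  μ j * Real.exp (-(θ * (k - ∑ l ∈ S with G.Adj j l, μ l)))

/-- `l` has the same edge as `j`, or blocks `j` from an edge that avoids `v`. -/
def HitsOutside {ι V : Type*} (π : ι → Finset V) (G : SimpleGraph ι) (v : V) (j l : ι) : Prop :=
  π l = π j ∨ (G.Adj j l ∧ v ∉ π l)

namespace IsNibble

open scoped Classical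

variable {ι V : Type*} {k : ℕ} {π : ι → Finset V} {G : SimpleGraph ι} {S J : Finset ι} {μ : ι → ℝ}
  {ρ y θ : ℝ} {i j l : ι} {v : V}

lemma one_le (h : IsNibble k π G S μ ρ y θ) : 1 ≤ y := by
  have := h.add_one_le
  have : (0 : ℝ) ≤ k := k.cast_nonneg
  linarith

lemma target_nonneg (h : IsNibble k π G S μ ρ y θ) (hi : i ∈ S) : 0 ≤ ρ := by
  linarith [h.le_list i hi, h.list_le i hi]

lemma prob_le_rate (h : IsNibble k π G S μ ρ y θ) (hi : i ∈ S) : θ * μ i ≤ θ := by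
  have inv_sq_le : 1 / y ^ 2 ≤ 1 := (div_le_one₀ (by nlinarith [h.one_le])).2
    (one_le_pow₀ h.one_le)
  exact mul_le_of_le_one_right h.rate_nonneg ((h.le_inv_sq i hi).trans inv_sq_le)

lemma prob_mem_Icc (h : IsNibble k π G S μ ρ y θ) : ∀ i ∈ S, θ * μ i ∈ Set.Icc 0 1 :=
  fun i hi => ⟨mul_nonneg h.rate_nonneg (h.nonneg i hi), by
    linarith [h.prob_le_rate hi, h.rate_le]⟩

lemma equalizedWeight_nonneg (h : IsNibble k π G S μ ρ y θ) (hj : j ∈ S) :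
    0 ≤ equalizedWeight k G S μ θ j :=
  mul_nonneg (h.nonneg j hj) (Real.exp_pos _).le

lemma equalizedWeight_le (h : IsNibble k π G S μ ρ y θ) (hj : j ∈ S) :
    equalizedWeight k G S μ θ j ≤ μ j := by
  refine mul_le_of_le_one_right (h.nonneg j hj) (Real.exp_le_one_iff.2 ?_)
  linarith [mul_nonneg h.rate_nonneg (sub_nonneg.2 (h.sum_adj_le hj))]

lemma sum_equalizedWeight_le (h : IsNibble k π G S μ ρ y θ) (hJ : J ⊆ S) {n : ℝ}
    (hn : (J.card : ℝ) ≤ n) : ∑ j ∈ J, equalizedWeight k G S μ θ j ≤ n / y ^ 2 := by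
  calc ∑ j ∈ J, equalizedWeight k G S μ θ j
    _ ≤ ∑ j ∈ J, 1 / y ^ 2 := Finset.sum_le_sum fun j hj =>
      (h.equalizedWeight_le (hJ hj)).trans (h.le_inv_sq j (hJ hj))
    _ = J.card / y ^ 2 := by rw [Finset.sum_const, nsmul_eq_mul, mul_one_div]
    _ ≤ n / y ^ 2 := by gcongr

lemma sum_equalizedWeight_mul_le (h : IsNibble k π G S μ ρ y θ) (hJ : J ⊆ S) {f : ι → ℝ} {b w : ℝ}
    (hf : ∀ j ∈ J, 0 ≤ f j) (hfb : ∀ j ∈ J, f j ≤ b) (hb : 0 ≤ b) (hw : ∑ j ∈ J, μ j ≤ w) :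
    ∑ j ∈ J, equalizedWeight k G S μ θ j * f j ≤ w * b := by
  calc ∑ j ∈ J, equalizedWeight k G S μ θ j * f j
    _ ≤ ∑ j ∈ J, μ j * b := Finset.sum_le_sum fun j hj =>
      mul_le_mul (h.equalizedWeight_le (hJ hj)) (hfb j hj) (hf j hj) (h.nonneg j (hJ hj))
    _ ≤ w * b := by
      rw [← Finset.sum_mul]
      gcongr

lemma sum_prob_adj_le (h : IsNibble k π G S μ ρ y θ) (hj : j ∈ S) :
    ∑ l ∈ S with G.Adj j l, θ * μ l ≤ θ * k := by
  rw [← Finset.mul_sum]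
  exact mul_le_mul_of_nonneg_left (h.sum_adj_le hj) h.rate_nonneg

lemma card_filter_list_adj_le_one (h : IsNibble k π G S μ ρ y θ) (i l : ι) :
    ((S.filter fun j => π j = π i).filter fun j => G.Adj j l).card ≤ 1 := by
  refine Finset.card_le_one.2 fun a ha b hb => ?_
  simp only [Finset.mem_filter] at ha hb
  exact h.eq_of_adj ha.2.symm hb.2.symm (ha.1.2.trans hb.1.2.symm)

lemma mul_exp_le_equalizedWeight_mul_prod (h : IsNibble k π G S μ ρ y θ) (hj : j ∈ S) :
    μ j * Real.exp (-(θ * k) - 2 * θ ^ 2 * k) ≤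
      equalizedWeight k G S μ θ j * ∏ l ∈ S with G.Adj j l, (1 - θ * μ l) := by
  have mem_list {l : ι} (hl : l ∈ S.filter (G.Adj j)) : l ∈ S := (Finset.mem_filter.1 hl).1
  set nw := ∑ l ∈ S with G.Adj j l, μ l with hnw
  have prod_ge : Real.exp (-(θ * nw * (1 + 2 * θ))) ≤ ∏ l ∈ S with G.Adj j l, (1 - θ * μ l) := by
    rw [hnw, Finset.mul_sum]
    exact exp_neg_mul_sum_le_prod_one_sub (fun l hl => (h.prob_mem_Icc l (mem_list hl)).1)
      (fun l hl => h.prob_le_rate (mem_list hl)) h.rate_le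
  rw [equalizedWeight, mul_assoc (μ j)]
  refine mul_le_mul_of_nonneg_left ?_ (h.nonneg j hj)
  calc Real.exp (-(θ * k) - 2 * θ ^ 2 * k)
    _ ≤ Real.exp (-(θ * (k - nw)) + -(θ * nw * (1 + 2 * θ))) := Real.exp_le_exp.2 <| by
      nlinarith [mul_le_mul_of_nonneg_left (h.sum_adj_le hj) (sq_nonneg θ)]
    _ ≤ _ := by
      rw [Real.exp_add]
      gcongr

lemma subsetProb_list_le (h : IsNibble k π G S μ ρ y θ) (hi : i ∈ S) (t : ℝ) :
    subsetProb (fun l => θ * μ l) S (fun A =>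
      avoidingSum {j ∈ S | π j = π i} (equalizedWeight k G S μ θ) G.Adj A ≤
        ρ * Real.exp (-(θ * k) - 2 * θ ^ 2 * k) - t) ≤
      Real.exp (-(y * t) + 2 * ρ * (θ * k)) := by
  have hy := h.one_le
  have hθ := h.rate_nonneg
  have list_subset : {j ∈ S | π j = π i} ⊆ S := Finset.filter_subset _ _
  have mean_ge : ρ * Real.exp (-(θ * k) - 2 * θ ^ 2 * k) ≤ ∑ j ∈ S with π j = π i,
      equalizedWeight k G S μ θ j * ∏ l ∈ S with G.Adj j l, (1 - θ * μ l) := by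
    calc ρ * Real.exp (-(θ * k) - 2 * θ ^ 2 * k)
      _ ≤ (∑ j ∈ S with π j = π i, μ j) * Real.exp (-(θ * k) - 2 * θ ^ 2 * k) := by
        gcongr
        exact h.le_list i hi
      _ ≤ _ := by
        rw [Finset.sum_mul]
        exact Finset.sum_le_sum fun j hj => h.mul_exp_le_equalizedWeight_mul_prod (list_subset hj)
  refine (subsetProb_avoidingSum_le_sub (l := y) (c := 1 / y ^ 2) (W := 2 * ρ * (θ * k))
    h.prob_mem_Icc (fun j hj => h.equalizedWeight_nonneg (list_subset hj)) (by linarith)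
    (by positivity) ?_ ?_ ?_ mean_ge t).trans_eq ?_
  · exact fun l _ => h.sum_equalizedWeight_le ((Finset.filter_subset _ _).trans list_subset)
      (by exact_mod_cast h.card_filter_list_adj_le_one i l)
  · rw [show y * (1 / y ^ 2) = 1 / y by field_simp]
    exact (div_le_one₀ (by linarith)).2 hy
  · exact h.sum_equalizedWeight_mul_le list_subset
      (fun j _ => Finset.sum_nonneg fun l hl => (h.prob_mem_Icc l (Finset.mem_filter.1 hl).1).1)
      (fun j hj => h.sum_prob_adj_le (list_subset hj)) (by positivity) (h.list_le i hi)
  · congr 2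
    field_simp

lemma card_filter_hitsOutside_le (h : IsBlockingSystem k π G) (i l : ι) (v : V) :
    ((colourNbhd π G S i v).filter fun j => HitsOutside π G v j l).card ≤ k + 1 := by
  have on_edge := h.card_filter_colourNbhd_le_one (S := S) i l v
  have outside : ((colourNbhd π G S i v).filter fun j => G.Adj j l ∧ v ∉ π l).card ≤ k := by
    refine le_trans (Finset.card_le_card_of_forall_subsingleton (fun j u => u ∈ π j)
      (fun j hj => ?_) fun u hu a ha b hb => ?_) (h.card_le l)
    · obtain ⟨u, huj, hul⟩ := h.exists_mem_of_adj (Finset.mem_filter.1 hj).2.1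
      exact ⟨u, hul, huj⟩
    · simp only [colourNbhd, Finset.mem_filter, Set.mem_ofPred_eq] at ha hb
      obtain ⟨⟨⟨-, ia, va⟩, -, hv⟩, ua⟩ := ha
      obtain ⟨⟨⟨-, ib, vb⟩, -, -⟩, ub⟩ := hb
      refine h.eq_of_adj ia ib (by_contra fun hne => hv ?_)
      exact h.eq_of_mem hne ua ub va vb ▸ hu
  have cover : ((colourNbhd π G S i v).filter fun j => HitsOutside π G v j l) ⊆
      ((colourNbhd π G S i v).filter fun j => π l = π j) ∪
        ((colourNbhd π G S i v).filter fun j => G.Adj j l ∧ v ∉ π l) := fun j hj => by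
    unfold HitsOutside at hj
    grind
  exact (Finset.card_le_card cover).trans ((Finset.card_union_le _ _).trans (by omega))

lemma sum_hitsOutside (h : IsNibble k π G S μ ρ y θ) (j : ι) (v : V) :
    ∑ l ∈ S with HitsOutside π G v j l, θ * μ l = θ * (∑ l ∈ S with π l = π j, μ l +
      (∑ l ∈ S with G.Adj j l, μ l - ∑ l ∈ colourNbhd π G S j v, μ l)) := by
  have disjoint_edge (l : ι) (hl : π l = π j) : ¬ G.Adj j l := fun hjl => h.ne_of_adj hjl hl.symm
  rw [← Finset.mul_sum, colourNbhd]
  simp only [Finset.sum_filter]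
  rw [← Finset.sum_sub_distrib, ← Finset.sum_add_distrib]
  congr 1
  refine Finset.sum_congr rfl fun l _ => ?_
  have := disjoint_edge l
  unfold HitsOutside
  split_ifs <;> simp_all

lemma sum_hitsOutside_le (h : IsNibble k π G S μ ρ y θ) (hj : j ∈ S) (v : V) :
    ∑ l ∈ S with HitsOutside π G v j l, θ * μ l ≤ θ * (2 * ρ + k) := by
  have hθ := h.rate_nonneg
  rw [h.sum_hitsOutside]
  gcongr
  · exact h.list_le j hj
  · have : 0 ≤ ∑ l ∈ colourNbhd π G S j v, μ l :=
      Finset.sum_nonneg fun l hl => h.nonneg l (colourNbhd_subset π j v hl)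
    linarith [h.sum_adj_le hj]

lemma equalizedWeight_mul_prod_le (h : IsNibble k π G S μ ρ y θ) (hj : j ∈ S) (hv : v ∈ π j) :
    equalizedWeight k G S μ θ j * ∏ l ∈ S with HitsOutside π G v j l, (1 - θ * μ l) ≤
      μ j * Real.exp (-(θ * (ρ + k - 1))) := by
  rw [equalizedWeight, mul_assoc (μ j)]
  refine mul_le_mul_of_nonneg_left ?_ (h.nonneg j hj)
  calc _ ≤ Real.exp (-(θ * (k - ∑ l ∈ S with G.Adj j l, μ l))) *
          Real.exp (-∑ l ∈ S with HitsOutside π G v j l, θ * μ l) := by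
        gcongr
        exact prod_one_sub_le_exp_neg_sum fun l hl =>
          (h.prob_mem_Icc l (Finset.mem_filter.1 hl).1).2
    _ ≤ Real.exp (-(θ * (ρ + k - 1))) := by
      rw [← Real.exp_add, h.sum_hitsOutside]
      refine Real.exp_le_exp.2 ?_
      nlinarith [mul_le_mul_of_nonneg_left (h.le_list j hj) h.rate_nonneg,
        mul_le_mul_of_nonneg_left (h.nbhd_le j hj v hv) h.rate_nonneg]

lemma subsetProb_add_le_nbhd (h : IsNibble k π G S μ ρ y θ) (hi : i ∈ S) (hv : v ∈ π i) (t : ℝ) :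
    subsetProb (fun l => θ * μ l) S (fun A => Real.exp (-(θ * (ρ + k - 1))) + t ≤
      avoidingSum (colourNbhd π G S i v) (equalizedWeight k G S μ θ) (HitsOutside π G v) A) ≤
      Real.exp (-(y * t) + (k + 1) * (θ * (2 * ρ + k))) := by
  have hy := h.one_le
  have hθ := h.rate_nonneg
  have hρ := h.target_nonneg hi
  have nbhd_subset : colourNbhd π G S i v ⊆ S := colourNbhd_subset π i v
  have mean_le : ∑ j ∈ colourNbhd π G S i v,
      equalizedWeight k G S μ θ j * ∏ l ∈ S with HitsOutside π G v j l, (1 - θ * μ l) ≤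
        Real.exp (-(θ * (ρ + k - 1))) := by
    calc _ ≤ ∑ j ∈ colourNbhd π G S i v, μ j * Real.exp (-(θ * (ρ + k - 1))) :=
          Finset.sum_le_sum fun j hj =>
            h.equalizedWeight_mul_prod_le (nbhd_subset hj) (Finset.mem_filter.1 hj).2.2
      _ ≤ 1 * Real.exp (-(θ * (ρ + k - 1))) := by
        rw [← Finset.sum_mul]
        gcongr
        exact h.nbhd_le i hi v hv
      _ = _ := one_mul _
  refine (subsetProb_add_le_avoidingSum (l := y) (c := (k + 1) / y ^ 2)
    (W := 1 * (θ * (2 * ρ + k)))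
    h.prob_mem_Icc (fun j hj => h.equalizedWeight_nonneg (nbhd_subset hj)) (by linarith)
    (by positivity) ?_ ?_ ?_ mean_le t).trans_eq ?_
  · exact fun l _ => h.sum_equalizedWeight_le ((Finset.filter_subset _ _).trans nbhd_subset)
      (by exact_mod_cast card_filter_hitsOutside_le h.toIsBlockingSystem i l v)
  · rw [show y * ((k + 1) / y ^ 2) = (k + 1) / y by field_simp]
    exact (div_le_one₀ (by linarith)).2 h.add_one_le
  · exact h.sum_equalizedWeight_mul_le nbhd_subset
      (fun j _ => Finset.sum_nonneg fun l hl => (h.prob_mem_Icc l (Finset.mem_filter.1 hl).1).1)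
      (fun j hj => h.sum_hitsOutside_le (nbhd_subset hj) v) (by positivity) (h.nbhd_le i hi v hv)
  · congr 2
    field_simp

end IsNibble

open scoped Classical in
/-- The coloured edges of `S` on the same edge as `i` or in conflict with `i`. -/
noncomputable def closedNbhd {ι β : Type*} (π : ι → β) (G : SimpleGraph ι) (S : Finset ι)
    (i : ι) : Finset ι :=
  {j ∈ S | π j = π i ∨ G.Adj i j}

open scoped Classical in
/-- The ball of radius three around `i` for the relation `closedNbhd`. -/
noncomputable def ballThree {ι β : Type*} (π : ι → β) (G : SimpleGraph ι) (S : Finset ι)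
    (i : ι) : Finset ι :=
  (closedNbhd π G S i).biUnion fun j => (closedNbhd π G S j).biUnion (closedNbhd π G S)

section Balls

open scoped Classical

variable {ι β : Type*} {π : ι → β} {G : SimpleGraph ι} {S : Finset ι} {i j l : ι} {N : ℕ}

lemma mem_closedNbhd : j ∈ closedNbhd π G S i ↔ j ∈ S ∧ (π j = π i ∨ G.Adj i j) :=
  Finset.mem_filter

lemma closedNbhd_subset (π : ι → β) (G : SimpleGraph ι) (S : Finset ι) (i : ι) :
    closedNbhd π G S i ⊆ S :=
  Finset.filter_subset _ _

lemma self_mem_closedNbhd (hi : i ∈ S) : i ∈ closedNbhd π G S i :=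
  mem_closedNbhd.2 ⟨hi, Or.inl rfl⟩

lemma mem_closedNbhd_symm (hi : i ∈ S) (h : j ∈ closedNbhd π G S i) : i ∈ closedNbhd π G S j :=
  mem_closedNbhd.2 ⟨hi, (mem_closedNbhd.1 h).2.imp Eq.symm SimpleGraph.Adj.symm⟩

lemma mem_ballThree : l ∈ ballThree π G S i ↔
    ∃ a ∈ closedNbhd π G S i, ∃ b ∈ closedNbhd π G S a, l ∈ closedNbhd π G S b := by
  simp only [ballThree, Finset.mem_biUnion]

lemma mem_ballThree_of_mem (hj : j ∈ closedNbhd π G S i) (hl : l ∈ closedNbhd π G S j) :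
    l ∈ ballThree π G S i :=
  mem_ballThree.2 ⟨j, hj, l, hl, self_mem_closedNbhd (closedNbhd_subset π G S j hl)⟩

lemma ballThree_subset (π : ι → β) (G : SimpleGraph ι) (S : Finset ι) (i : ι) :
    ballThree π G S i ⊆ S := fun _ h => by
  obtain ⟨_, -, b, -, h⟩ := mem_ballThree.1 h
  exact closedNbhd_subset π G S b h

lemma mem_ballThree_symm (hi : i ∈ S) (h : l ∈ ballThree π G S i) : i ∈ ballThree π G S l := by
  obtain ⟨a, ha, b, hb, hl⟩ := mem_ballThree.1 h
  exact mem_ballThree.2 ⟨b, mem_closedNbhd_symm (closedNbhd_subset π G S a hb) hl, a,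
    mem_closedNbhd_symm (closedNbhd_subset π G S i ha) hb, mem_closedNbhd_symm hi ha⟩

lemma card_ballThree_le (hN : ∀ i ∈ S, (closedNbhd π G S i).card ≤ N) (hi : i ∈ S) :
    (ballThree π G S i).card ≤ N ^ 3 := by
  rw [show N ^ 3 = N * (N * N) by ring]
  refine (Finset.card_biUnion_le_card_mul _ _ (N * N) fun a ha => ?_).trans
    (Nat.mul_le_mul_right _ (hN i hi))
  have haS := closedNbhd_subset π G S i ha
  exact (Finset.card_biUnion_le_card_mul _ _ N fun b hb =>
    hN b (closedNbhd_subset π G S a hb)).trans (Nat.mul_le_mul_right _ (hN a haS))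

lemma card_filter_not_disjoint_ballThree_le (hN : ∀ i ∈ S, (closedNbhd π G S i).card ≤ N)
    (hi : i ∈ S) :
    (S.filter fun j => ¬ Disjoint (ballThree π G S i) (ballThree π G S j)).card ≤ N ^ 6 := by
  have overlap_subset : (S.filter fun j => ¬ Disjoint (ballThree π G S i) (ballThree π G S j)) ⊆
      (ballThree π G S i).biUnion (ballThree π G S) := fun j hj => by
    obtain ⟨hjS, overlap⟩ := Finset.mem_filter.1 hj
    obtain ⟨l, hli, hlj⟩ := Finset.not_disjoint_iff.1 overlap
    exact Finset.mem_biUnion.2 ⟨l, hli, mem_ballThree_symm hjS hlj⟩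
  rw [show N ^ 6 = N ^ 3 * N ^ 3 by ring]
  exact (Finset.card_le_card overlap_subset).trans <|
    (Finset.card_biUnion_le_card_mul _ _ _ fun l hl =>
      card_ballThree_le hN (ballThree_subset π G S i hl)).trans
    (Nat.mul_le_mul_right _ (card_ballThree_le hN hi))

end Balls

open scoped Classical in
/-- The weight of the colour in the neighbourhood of `i` at `v` that sits on the edge of `l`. -/
noncomputable def nbhdWeightOnEdge {ι V : Type*} (π : ι → Finset V) (G : SimpleGraph ι)
    (S : Finset ι) (μ : ι → ℝ) (i : ι) (v : V) (l : ι) : ℝ :=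
  ∑ j ∈ colourNbhd π G S i v with π l = π j, μ j

/-- The edge `e` gets no colour from the activated set `A`: all its activated colours are blocked
by activated ones. -/
def IsUncoloured {ι β : Type*} (π : ι → β) (G : SimpleGraph ι) (A : Finset ι) (e : β) : Prop :=
  ∀ l ∈ A, π l = e → ∃ g ∈ A, G.Adj l g

open scoped Classical in
/-- The coloured edges left over by the nibble `A`: those on uncoloured edges that are not blocked
by an activated one. -/
noncomputable def survivors {ι β : Type*} (π : ι → β) (G : SimpleGraph ι) (S A : Finset ι) :
    Finset ι :=
  {j ∈ S | IsUncoloured π G A (π j) ∧ ∀ g ∈ A, ¬ G.Adj j g}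

namespace IsNibble

open scoped Classical

variable {ι V : Type*} {k : ℕ} {π : ι → Finset V} {G : SimpleGraph ι} {S A : Finset ι}
  {μ : ι → ℝ} {ρ y θ : ℝ} {i j l g : ι} {v : V}

lemma nbhdWeightOnEdge_nonneg (h : IsNibble k π G S μ ρ y θ) (l : ι) :
    0 ≤ nbhdWeightOnEdge π G S μ i v l :=
  Finset.sum_nonneg fun j hj =>
    h.nonneg j (colourNbhd_subset π i v (Finset.mem_filter.1 hj).1)

lemma nbhdWeightOnEdge_le (h : IsNibble k π G S μ ρ y θ) (l : ι) :
    nbhdWeightOnEdge π G S μ i v l ≤ 1 / y ^ 2 := by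
  have one_term : (((colourNbhd π G S i v).filter fun j => π l = π j).card : ℝ) ≤ 1 := by
    exact_mod_cast h.card_filter_colourNbhd_le_one i l v
  calc nbhdWeightOnEdge π G S μ i v l
    _ ≤ ((colourNbhd π G S i v).filter fun j => π l = π j).card • (1 / y ^ 2) :=
      Finset.sum_le_card_nsmul _ _ _ fun j hj =>
        h.le_inv_sq j (colourNbhd_subset π i v (Finset.mem_filter.1 hj).1)
    _ ≤ 1 / y ^ 2 := by
      rw [nsmul_eq_mul]
      exact mul_le_of_le_one_left (by positivity) one_term

lemma sum_mul_nbhdWeightOnEdge_le (h : IsNibble k π G S μ ρ y θ) (hi : i ∈ S) (hv : v ∈ π i) :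
    ∑ l ∈ S, θ * μ l * nbhdWeightOnEdge π G S μ i v l ≤ θ * (2 * ρ) := by
  have hθ := h.rate_nonneg
  have hρ := h.target_nonneg hi
  have nbhd_subset : colourNbhd π G S i v ⊆ S := colourNbhd_subset π i v
  calc ∑ l ∈ S, θ * μ l * nbhdWeightOnEdge π G S μ i v l
    _ = ∑ j ∈ colourNbhd π G S i v, μ j * ∑ l ∈ S with π l = π j, θ * μ l := by
      simp only [nbhdWeightOnEdge]
      convert sum_mul_sum_filter_comm (p := fun l => θ * μ l) (T := fun j l => π l = π j)
    _ ≤ ∑ j ∈ colourNbhd π G S i v, μ j * (θ * (2 * ρ)) := by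
      refine Finset.sum_le_sum fun j hj => mul_le_mul_of_nonneg_left ?_
        (h.nonneg j (nbhd_subset hj))
      rw [← Finset.mul_sum]
      exact mul_le_mul_of_nonneg_left (h.list_le j (nbhd_subset hj)) hθ
    _ ≤ 1 * (θ * (2 * ρ)) := by
      rw [← Finset.sum_mul]
      gcongr
      exact h.nbhd_le i hi v hv
    _ = θ * (2 * ρ) := one_mul _

lemma mem_ballThree_of_adjWeight_ne_zero (hl : l ∈ S) (hg : g ∈ S)
    (hw : adjWeight G (nbhdWeightOnEdge π G S μ i v) l g ≠ 0) : l ∈ ballThree π G S i := by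
  have mem_edge {x : ι} (hx : nbhdWeightOnEdge π G S μ i v x ≠ 0) :
      ∃ j ∈ closedNbhd π G S i, π x = π j := by
    obtain ⟨j, hj, -⟩ := Finset.exists_ne_zero_of_sum_ne_zero hx
    obtain ⟨hj, hxj⟩ := Finset.mem_filter.1 hj
    obtain ⟨hjS, hij, -⟩ := Finset.mem_filter.1 hj
    exact ⟨j, mem_closedNbhd.2 ⟨hjS, Or.inr hij⟩, hxj⟩
  obtain ⟨adj, sum_ne⟩ : G.Adj l g ∧
      nbhdWeightOnEdge π G S μ i v l + nbhdWeightOnEdge π G S μ i v g ≠ 0 := by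
    simpa only [adjWeight, ne_eq, ite_eq_right_iff, Classical.not_imp] using hw
  by_cases hwl : nbhdWeightOnEdge π G S μ i v l = 0
  · rw [hwl, zero_add] at sum_ne
    obtain ⟨j, hj, hgj⟩ := mem_edge sum_ne
    exact mem_ballThree.2 ⟨j, hj, g, mem_closedNbhd.2 ⟨hg, Or.inl hgj⟩,
      mem_closedNbhd.2 ⟨hl, Or.inr adj.symm⟩⟩
  · obtain ⟨j, hj, hlj⟩ := mem_edge hwl
    exact mem_ballThree_of_mem hj (mem_closedNbhd.2 ⟨hl, Or.inl hlj⟩)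

lemma subsetProb_add_le_weightedDegreeSum_nbhd (h : IsNibble k π G S μ ρ y θ) (hi : i ∈ S)
    (hv : v ∈ π i) (t : ℝ) :
    subsetProb (fun l => θ * μ l) S (fun A => 8 * (θ * (2 * ρ) * (θ * k)) + 3 * t ≤
      weightedDegreeSum G (nbhdWeightOnEdge π G S μ i v) A) ≤
      (ballThree π G S i).card * Real.exp (-y + 2 * (θ * k)) + Real.exp (-(y * t)) +
        Real.exp (-(y / 2 * t)) := by
  have hθ := h.rate_nonneg
  have hk : (0 : ℝ) ≤ k := k.cast_nonneg
  refine subsetProb_add_le_weightedDegreeSum h.prob_mem_Icc h.nbhdWeightOnEdge_nonneg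
    (fun l _ => h.nbhdWeightOnEdge_le l) (by linarith [h.one_le]) ?_
    (fun l hl => h.sum_prob_adj_le hl) (by positivity) (h.sum_mul_nbhdWeightOnEdge_le hi hv)
    (ballThree_subset π G S i) (fun l hl g hg => mem_ballThree_of_adjWeight_ne_zero hl hg) t
  nlinarith [h.add_one_le, mul_le_mul_of_nonneg_right h.rate_le hk]

lemma sum_le_weightedDegreeSum_nbhd (h : IsNibble k π G S μ ρ y θ) (i : ι) (v : V)
    (A : Finset ι) :
    ∑ j ∈ colourNbhd π G S i v with ∃ l ∈ A, π l = π j ∧ ∃ g ∈ A, G.Adj l g, μ j ≤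
      weightedDegreeSum G (nbhdWeightOnEdge π G S μ i v) A := by
  have weight_nonneg {j : ι} (hj : j ∈ colourNbhd π G S i v) : 0 ≤ μ j :=
    h.nonneg j (colourNbhd_subset π i v hj)
  have regroup : weightedDegreeSum G (nbhdWeightOnEdge π G S μ i v) A =
      ∑ j ∈ colourNbhd π G S i v, ∑ l ∈ A with π l = π j, ∑ g ∈ A with G.Adj l g, μ j := by
    simp only [weightedDegreeSum, nbhdWeightOnEdge, Finset.sum_const, Finset.smul_sum]
    exact Finset.sum_comm' (by grind)
  rw [regroup, Finset.sum_filter]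
  refine Finset.sum_le_sum fun j hj => ?_
  have inner_nonneg (l : ι) : 0 ≤ ∑ g ∈ A with G.Adj l g, μ j :=
    Finset.sum_nonneg fun _ _ => weight_nonneg hj
  split_ifs with hit
  · obtain ⟨l, hl, hlj, g, hg, hlg⟩ := hit
    calc μ j
      _ ≤ ∑ g ∈ A with G.Adj l g, μ j :=
        Finset.single_le_sum (f := fun _ => μ j) (fun _ _ => weight_nonneg hj)
          (Finset.mem_filter.2 ⟨hg, hlg⟩)
      _ ≤ ∑ l ∈ A with π l = π j, ∑ g ∈ A with G.Adj l g, μ j :=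
        Finset.single_le_sum (f := fun l => ∑ g ∈ A with G.Adj l g, μ j)
          (fun l _ => inner_nonneg l) (Finset.mem_filter.2 ⟨hl, hlj⟩)
  · exact Finset.sum_nonneg fun l _ => inner_nonneg l

lemma sum_survivors_nbhd_le (h : IsNibble k π G S μ ρ y θ) (i : ι) (v : V) (A : Finset ι) :
    ∑ j ∈ colourNbhd π G (survivors π G S A) i v, equalizedWeight k G S μ θ j ≤
      avoidingSum (colourNbhd π G S i v) (equalizedWeight k G S μ θ) (HitsOutside π G v) A +
        weightedDegreeSum G (nbhdWeightOnEdge π G S μ i v) A := by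
  set J := colourNbhd π G S i v
  set missed := J.filter fun j => ∀ g ∈ A, ¬ HitsOutside π G v j g
  set crossed := J.filter fun j => ∃ l ∈ A, π l = π j ∧ ∃ g ∈ A, G.Adj l g
  have nbhd_subset : J ⊆ S := colourNbhd_subset π i v
  have cover : colourNbhd π G (survivors π G S A) i v ⊆ missed ∪ crossed := fun j hj => by
    simp only [colourNbhd, survivors, Finset.mem_filter] at hj
    obtain ⟨⟨hjS, uncoloured, unblocked⟩, hij, hvj⟩ := hj
    have hjJ : j ∈ J := Finset.mem_filter.2 ⟨hjS, hij, hvj⟩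
    by_cases hits : ∃ l ∈ A, HitsOutside π G v j l
    · obtain ⟨l, hl, hlj⟩ := hits
      have same_edge : π l = π j := hlj.resolve_right fun hjl => unblocked l hl hjl.1
      exact Finset.mem_union_right _ <| Finset.mem_filter.2
        ⟨hjJ, l, hl, same_edge, uncoloured l hl same_edge⟩
    · push Not at hits
      exact Finset.mem_union_left _ (Finset.mem_filter.2 ⟨hjJ, hits⟩)
  have weight_nonneg {j : ι} (hj : j ∈ J) : 0 ≤ equalizedWeight k G S μ θ j :=
    h.equalizedWeight_nonneg (nbhd_subset hj)
  calc ∑ j ∈ colourNbhd π G (survivors π G S A) i v, equalizedWeight k G S μ θ j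
    _ ≤ ∑ j ∈ missed ∪ crossed, equalizedWeight k G S μ θ j :=
      Finset.sum_le_sum_of_subset_of_nonneg cover fun j hj _ => weight_nonneg <|
        (Finset.mem_union.1 hj).elim (Finset.filter_subset _ _ ·) (Finset.filter_subset _ _ ·)
    _ ≤ ∑ j ∈ missed, equalizedWeight k G S μ θ j + ∑ j ∈ crossed, equalizedWeight k G S μ θ j := by
      rw [← Finset.sum_union_inter]
      exact le_add_of_nonneg_right <| Finset.sum_nonneg fun j hj =>
        weight_nonneg (Finset.mem_filter.1 (Finset.mem_inter.1 hj).1).1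
    _ ≤ _ := by
      refine add_le_add le_rfl (le_trans ?_ (h.sum_le_weightedDegreeSum_nbhd i v A))
      exact Finset.sum_le_sum fun j hj =>
        h.equalizedWeight_le (nbhd_subset (Finset.mem_filter.1 hj).1)

end IsNibble

/-- A lower bound for the weight of the list of an uncoloured edge after a nibble. -/
noncomputable def nextListWeight (k : ℕ) (ρ θ : ℝ) : ℝ :=
  ρ * Real.exp (-(θ * k) - 2 * θ ^ 2 * k) - θ ^ 2

/-- An upper bound for the weight of a colour neighbourhood after a nibble. -/
noncomputable def nextNbhdWeight (k : ℕ) (ρ θ : ℝ) : ℝ :=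
  Real.exp (-(θ * (ρ + k - 1))) + (16 * k * ρ + 4) * θ ^ 2

open scoped Classical in
/-- The nibble `A` is bad at `i`: it leaves too small a list on the edge of `i`, or too heavy a
colour neighbourhood of `i`. -/
def IsBadNibble {ι V : Type*} (k : ℕ) (π : ι → Finset V) (G : SimpleGraph ι) (S : Finset ι)
    (μ : ι → ℝ) (ρ θ : ℝ) (i : ι) (A : Finset ι) : Prop :=
  avoidingSum {j ∈ S | π j = π i} (equalizedWeight k G S μ θ) G.Adj A ≤ nextListWeight k ρ θ ∨
    ∃ v ∈ π i, nextNbhdWeight k ρ θ ≤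
      ∑ j ∈ colourNbhd π G (survivors π G S A) i v, equalizedWeight k G S μ θ j

section NibbleStep

open scoped Classical

variable {ι V : Type*} {k N : ℕ} {π : ι → Finset V} {G : SimpleGraph ι} {S A : Finset ι}
  {μ : ι → ℝ} {ρ y θ q : ℝ} {i j : ι} {v : V}

lemma le_cube_mul_of_card_closedNbhd_le (hN : ∀ i ∈ S, (closedNbhd π G S i).card ≤ N)
    (hi : i ∈ S) {r u : ℝ} (hr : r ≤ u) (hu : 0 ≤ u) : r ≤ N ^ 3 * u := by
  have one_le_N : (1 : ℝ) ≤ N := by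
    exact_mod_cast (Finset.card_pos.2 ⟨i, self_mem_closedNbhd hi⟩).trans_le (hN i hi)
  exact hr.trans (le_mul_of_one_le_left hu (one_le_pow₀ one_le_N))

lemma subsetProb_nextNbhdWeight_le_le (h : IsNibble k π G S μ ρ y θ)
    (hN : ∀ i ∈ S, (closedNbhd π G S i).card ≤ N) (hi : i ∈ S) (hv : v ∈ π i) :
    subsetProb (fun l => θ * μ l) S (fun A => nextNbhdWeight k ρ θ ≤
      ∑ j ∈ colourNbhd π G (survivors π G S A) i v, equalizedWeight k G S μ θ j) ≤
      4 * (N ^ 3 * Real.exp ((k + 1) * (2 * ρ + k) - θ ^ 2 / 2 * y)) := by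
  have hk : (0 : ℝ) ≤ k := k.cast_nonneg
  have hρ := h.target_nonneg hi
  have hθ := h.rate_nonneg
  have hθ' := h.rate_le
  have hy : 0 ≤ y := by linarith [h.one_le]
  have ball_le : ((ballThree π G S i).card : ℝ) ≤ N ^ 3 := mod_cast card_ballThree_le hN hi
  set M : ℝ := (k + 1) * (2 * ρ + k)
  have hM_nonneg : 0 ≤ M := by positivity
  have conflict_le : (k + 1) * (θ * (2 * ρ + k)) ≤ M := by
    nlinarith
  have pair_le : 2 * (θ * k) ≤ M := by nlinarith [mul_nonneg hk hρ, mul_nonneg hk hk]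
  have hθy : 0 ≤ y * θ ^ 2 := by positivity
  have hθy' : y * θ ^ 2 ≤ y := mul_le_of_le_one_right hy (by nlinarith)
  have exp_le {a : ℝ} (ha : a ≤ M - θ ^ 2 / 2 * y) :
      Real.exp a ≤ N ^ 3 * Real.exp (M - θ ^ 2 / 2 * y) :=
    le_cube_mul_of_card_closedNbhd_le hN hi (Real.exp_le_exp.2 ha) (Real.exp_pos _).le
  calc _ ≤ _ := subsetProb_mono h.prob_mem_Icc fun A _ heavy => by
        have := heavy.trans (h.sum_survivors_nbhd_le i v A)
        rw [nextNbhdWeight] at this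
        by_contra! light
        linarith [light.1, light.2]
    _ ≤ _ := subsetProb_or_le h.prob_mem_Icc
    _ ≤ Real.exp (-(y * θ ^ 2) + (k + 1) * (θ * (2 * ρ + k))) +
        ((ballThree π G S i).card * Real.exp (-y + 2 * (θ * k)) + Real.exp (-(y * θ ^ 2)) +
          Real.exp (-(y / 2 * θ ^ 2))) :=
      add_le_add (h.subsetProb_add_le_nbhd hi hv (θ ^ 2))
        (h.subsetProb_add_le_weightedDegreeSum_nbhd hi hv (θ ^ 2))
    _ ≤ N ^ 3 * Real.exp (M - θ ^ 2 / 2 * y) + (N ^ 3 * Real.exp (M - θ ^ 2 / 2 * y) +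
        N ^ 3 * Real.exp (M - θ ^ 2 / 2 * y) + N ^ 3 * Real.exp (M - θ ^ 2 / 2 * y)) := by
      refine add_le_add (exp_le ?_) (add_le_add (add_le_add (mul_le_mul ball_le
        (Real.exp_le_exp.2 ?_) (Real.exp_pos _).le (by positivity)) (exp_le ?_)) (exp_le ?_)) <;>
        linarith
    _ = _ := by ring

lemma subsetProb_isBadNibble_le (h : IsNibble k π G S μ ρ y θ)
    (hN : ∀ i ∈ S, (closedNbhd π G S i).card ≤ N) (hi : i ∈ S) :
    subsetProb (fun l => θ * μ l) S (IsBadNibble k π G S μ ρ θ i) ≤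
      (1 + 4 * k) * N ^ 3 * Real.exp ((k + 1) * (2 * ρ + k) - θ ^ 2 / 2 * y) := by
  have hρ := h.target_nonneg hi
  set u := Real.exp ((k + 1) * (2 * ρ + k) - θ ^ 2 / 2 * y)
  have exponent_le : -(y * θ ^ 2) + 2 * ρ * (θ * k) ≤
      (k + 1) * (2 * ρ + k) - θ ^ 2 / 2 * y := by
    have θk_le : θ * k ≤ k + 1 := by nlinarith [h.rate_le]
    nlinarith [mul_nonneg (sq_nonneg θ) (zero_le_one.trans h.one_le),
      mul_le_mul_of_nonneg_left θk_le hρ]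
  calc subsetProb (fun l => θ * μ l) S (IsBadNibble k π G S μ ρ θ i)
    _ ≤ _ := subsetProb_or_le h.prob_mem_Icc
    _ ≤ N ^ 3 * u + (π i).card • (4 * (N ^ 3 * u)) :=
      add_le_add ((h.subsetProb_list_le hi (θ ^ 2)).trans <|
          le_cube_mul_of_card_closedNbhd_le hN hi (Real.exp_le_exp.2 exponent_le)
            (Real.exp_pos _).le)
        ((subsetProb_exists_le h.prob_mem_Icc _ _).trans (Finset.sum_le_card_nsmul _ _ _
          fun v hv => subsetProb_nextNbhdWeight_le_le h hN hi hv))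
    _ ≤ N ^ 3 * u + k • (4 * (N ^ 3 * u)) := by
      gcongr
      exact h.card_le i
    _ = (1 + 4 * k) * N ^ 3 * u := by
      rw [nsmul_eq_mul]
      ring

lemma forall_not_adj_inter_ballThree_iff (hA : A ⊆ S) (hj : j ∈ closedNbhd π G S i) :
    (∀ g ∈ A ∩ ballThree π G S i, ¬ G.Adj j g) ↔ ∀ g ∈ A, ¬ G.Adj j g :=
  ⟨fun unblocked g hg adj => unblocked g (Finset.mem_inter.2 ⟨hg, mem_ballThree_of_mem hj
    (mem_closedNbhd.2 ⟨hA hg, Or.inr adj⟩)⟩) adj, fun unblocked g hg =>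
    unblocked g (Finset.mem_inter.1 hg).1⟩

lemma isUncoloured_inter_ballThree_iff (hA : A ⊆ S) (hj : j ∈ closedNbhd π G S i) :
    IsUncoloured π G (A ∩ ballThree π G S i) (π j) ↔ IsUncoloured π G A (π j) := by
  have mem_nbhd {l : ι} (hl : l ∈ A) (hlj : π l = π j) : l ∈ closedNbhd π G S j :=
    mem_closedNbhd.2 ⟨hA hl, Or.inl hlj⟩
  constructor <;> intro uncoloured l hl hlj
  · obtain ⟨g, hg, adj⟩ := uncoloured l
      (Finset.mem_inter.2 ⟨hl, mem_ballThree_of_mem hj (mem_nbhd hl hlj)⟩) hlj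
    exact ⟨g, (Finset.mem_inter.1 hg).1, adj⟩
  · have hlA := (Finset.mem_inter.1 hl).1
    obtain ⟨g, hg, adj⟩ := uncoloured l hlA hlj
    exact ⟨g, Finset.mem_inter.2 ⟨hg, mem_ballThree.2 ⟨j, hj, l, mem_nbhd hlA hlj,
      mem_closedNbhd.2 ⟨hA hg, Or.inr adj⟩⟩⟩, adj⟩

lemma determinedBy_isBadNibble (k : ℕ) (π : ι → Finset V) (G : SimpleGraph ι) (S : Finset ι)
    (μ : ι → ℝ) (ρ θ : ℝ) (i : ι) :
    DeterminedBy (fun A => IsBadNibble k π G S μ ρ θ i (A ∩ S)) (ballThree π G S i) := fun A => by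
  have hA : A ∩ S ⊆ S := Finset.inter_subset_right
  have list_eq : avoidingSum {j ∈ S | π j = π i} (equalizedWeight k G S μ θ) G.Adj
      (A ∩ S ∩ ballThree π G S i) =
      avoidingSum {j ∈ S | π j = π i} (equalizedWeight k G S μ θ) G.Adj (A ∩ S) := by
    refine Finset.sum_congr (Finset.filter_congr fun j hj => ?_) fun _ _ => rfl
    obtain ⟨hjS, hji⟩ := Finset.mem_filter.1 hj
    exact forall_not_adj_inter_ballThree_iff hA (mem_closedNbhd.2 ⟨hjS, Or.inl hji⟩)
  have nbhd_eq (v : V) : colourNbhd π G (survivors π G S (A ∩ S ∩ ballThree π G S i)) i v =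
      colourNbhd π G (survivors π G S (A ∩ S)) i v := by
    simp only [colourNbhd, survivors, Finset.filter_filter]
    refine Finset.filter_congr fun j hjS => and_congr_left fun hij => ?_
    have hj : j ∈ closedNbhd π G S i := mem_closedNbhd.2 ⟨hjS, Or.inr hij.1⟩
    rw [isUncoloured_inter_ballThree_iff hA hj, forall_not_adj_inter_ballThree_iff hA hj]
  change IsBadNibble k π G S μ ρ θ i (A ∩ S) =
    IsBadNibble k π G S μ ρ θ i (A ∩ ballThree π G S i ∩ S)
  rw [Finset.inter_right_comm, IsBadNibble, IsBadNibble, list_eq]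
  simp only [nbhd_eq]

lemma avoidingSum_list_eq_sum_survivors {e : Finset V} (a : ι → ℝ) (he : IsUncoloured π G A e) :
    avoidingSum {j ∈ S | π j = e} a G.Adj A = ∑ j ∈ survivors π G S A with π j = e, a j := by
  refine Finset.sum_congr ?_ fun _ _ => rfl
  ext j
  simp only [survivors, Finset.mem_filter]
  constructor
  · rintro ⟨⟨hj, rfl⟩, unblocked⟩
    exact ⟨⟨hj, he, unblocked⟩, rfl⟩
  · rintro ⟨⟨hj, -, unblocked⟩, rfl⟩
    exact ⟨⟨hj, rfl⟩, unblocked⟩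

lemma HasIndepTransversal.of_survivors {β : Type*} {π : ι → β}
    (h : HasIndepTransversal π G (survivors π G S A)) (hA : A ⊆ S)
    (hmeet : ∀ i ∈ S, IsUncoloured π G A (π i) → ∃ j ∈ survivors π G S A, π j = π i) :
    HasIndepTransversal π G S := by
  obtain ⟨A', hA', indep, meets⟩ := h
  have unblocked {j : ι} (hj : j ∈ A') : ∀ g ∈ A, ¬ G.Adj j g :=
    (Finset.mem_filter.1 (hA' hj)).2.2
  refine ⟨A.filter (fun j => ∀ g ∈ A, ¬ G.Adj j g) ∪ A', Finset.union_subset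
    ((Finset.filter_subset _ _).trans hA) (hA'.trans (Finset.filter_subset _ _)), ?_, ?_⟩
  · rw [SimpleGraph.isIndepSet_iff]
    intro a ha b hb hab adj
    simp only [Finset.coe_union, Finset.coe_filter, Set.mem_union, Set.mem_ofPred_eq,
      Finset.mem_coe] at ha hb
    rcases ha, hb with ⟨⟨haA, ha⟩ | ha, ⟨hbA, -⟩ | hb⟩
    · exact ha b hbA adj
    · exact unblocked hb a haA adj.symm
    · exact unblocked ha b hbA adj
    · exact indep ha hb hab adj
  · intro i hi
    by_cases hUncoloured : IsUncoloured π G A (π i)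
    · obtain ⟨j, hj, hji⟩ := hmeet i hi hUncoloured
      obtain ⟨l, hl, hlj⟩ := meets j hj
      exact ⟨l, Finset.mem_union_right _ hl, hlj.trans hji⟩
    · simp only [IsUncoloured, not_forall, not_exists, not_and] at hUncoloured
      obtain ⟨l, hl, hli, hUnblocked⟩ := hUncoloured
      exact ⟨l, Finset.mem_union_left _ (Finset.mem_filter.2 ⟨hl, hUnblocked⟩), hli⟩

theorem IsNibble.exists_subset (h : IsNibble k π G S μ ρ y θ)
    (hN : ∀ i ∈ S, (closedNbhd π G S i).card ≤ N)
    (hlocal : 4 * (1 + 4 * k) * N ^ 9 * Real.exp ((k + 1) * (2 * ρ + k) - θ ^ 2 / 2 * y) ≤ 1)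
    (hlist : 0 ≤ nextListWeight k ρ θ) :
    ∃ S' ⊆ S, (HasIndepTransversal π G S' → HasIndepTransversal π G S) ∧
      (∀ i ∈ S', nextListWeight k ρ θ ≤ ∑ j ∈ S' with π j = π i, equalizedWeight k G S μ θ j) ∧
      ∀ i ∈ S', ∀ v ∈ π i,
        ∑ j ∈ colourNbhd π G S' i v, equalizedWeight k G S μ θ j ≤ nextNbhdWeight k ρ θ := by
  set q := (1 + 4 * k) * N ^ 3 * Real.exp ((k + 1) * (2 * ρ + k) - θ ^ 2 / 2 * y) with hq
  have hqN : 4 * q * (N : ℝ) ^ 6 ≤ 1 := by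
    rw [hq]
    linarith
  rcases S.eq_empty_or_nonempty with rfl | ⟨i₀, hi₀⟩
  · exact ⟨∅, subset_rfl, id, by simp, by simp⟩
  have one_le_N : (1 : ℝ) ≤ N := by
    exact_mod_cast (Finset.card_pos.2 ⟨i₀, self_mem_closedNbhd hi₀⟩).trans_le (hN i₀ hi₀)
  have q_lt : q < 1 / 2 := by
    have : 4 * q * 1 ≤ 4 * q * (N : ℝ) ^ 6 := by
      gcongr
      exact one_le_pow₀ one_le_N
    linarith
  obtain ⟨A, hA, good⟩ := exists_subset_forall_not_of_local_lemma h.prob_mem_Icc (T := S)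
    (B := fun i A => IsBadNibble k π G S μ ρ θ i (A ∩ S)) (D := ballThree π G S)
    (fun i _ => determinedBy_isBadNibble k π G S μ ρ θ i)
    (fun i hi => (subsetProb_mono h.prob_mem_Icc fun A hA bad => by
      rwa [Finset.inter_eq_left.2 hA] at bad).trans (subsetProb_isBadNibble_le h hN hi))
    q_lt (fun i hi => mod_cast card_filter_not_disjoint_ballThree_le hN hi) hqN
  simp only [Finset.inter_eq_left.2 hA, IsBadNibble, not_or, not_exists, not_and, not_le] at good
  have list_lt (i : ι) (hi : i ∈ S) (uncoloured : IsUncoloured π G A (π i)) :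
      nextListWeight k ρ θ <
        ∑ j ∈ survivors π G S A with π j = π i, equalizedWeight k G S μ θ j :=
    (good i hi).1.trans_eq (avoidingSum_list_eq_sum_survivors _ uncoloured)
  have survivors_subset : survivors π G S A ⊆ S := Finset.filter_subset _ _
  refine ⟨survivors π G S A, survivors_subset, fun hS' => hS'.of_survivors hA fun i hi hUnc => ?_,
    fun i hi => (list_lt i (survivors_subset hi) (Finset.mem_filter.1 hi).2.1).le,
    fun i hi v hv => ((good i (survivors_subset hi)).2 v hv).le⟩
  obtain ⟨j, hj, -⟩ := Finset.exists_ne_zero_of_sum_ne_zero (hlist.trans_lt (list_lt i hi hUnc)).ne'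
  exact ⟨j, Finset.mem_filter.1 hj⟩

end NibbleStep

/-! ### Iterating the nibble -/

section NibbleRate

variable {k : ℕ} {ε ρ θ : ℝ}

lemma exp_neg_le_one_sub_half {u : ℝ} (hu0 : 0 ≤ u) (hu1 : u ≤ 1 / 2) :
    Real.exp (-u) ≤ 1 - u / 2 := by
  have quadratic := exp_le_one_add_add_sq_of_abs_le_one (u := -u) (by
    rw [abs_neg, abs_of_nonneg hu0]
    linarith)
  nlinarith

lemma nextNbhdWeight_le (hε : 0 ≤ ε) (hρ : 1 + ε ≤ ρ) (hθ : 0 ≤ θ) (hθk : θ * k ≤ 1 / 2)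
    (hθε : θ * ε ≤ 1 / 2) (hθρ : θ * (16 * k * ρ + 4) ≤ ε / 8) :
    nextNbhdWeight k ρ θ ≤ Real.exp (-(θ * k)) * (1 - θ * ε / 4) := by
  set E := Real.exp (-(θ * k))
  have half_le : 1 / 2 ≤ E := by linarith [Real.add_one_le_exp (-(θ * k))]
  have hθε' : 0 ≤ θ * ε := mul_nonneg hθ hε
  have linear_gain : Real.exp (-(θ * (ρ + k - 1))) ≤ E * (1 - θ * ε / 2) := by
    calc Real.exp (-(θ * (ρ + k - 1)))
      _ ≤ Real.exp (-(θ * k) + -(θ * ε)) := Real.exp_le_exp.2 <| by nlinarith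
      _ = E * Real.exp (-(θ * ε)) := Real.exp_add _ _
      _ ≤ E * (1 - θ * ε / 2) := by
        gcongr
        exact exp_neg_le_one_sub_half hθε' hθε
  have quadratic_loss : (16 * k * ρ + 4) * θ ^ 2 ≤ E * (θ * ε / 4) := by
    nlinarith [mul_le_mul_of_nonneg_left hθρ hθ]
  rw [nextNbhdWeight]
  linarith

lemma one_sub_le_nextNbhdWeight (hρ : 0 ≤ ρ) :
    1 - θ * (ρ + k - 1) ≤ nextNbhdWeight k ρ θ := by
  have quadratic_nonneg : 0 ≤ (16 * k * ρ + 4) * θ ^ 2 := by positivity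
  rw [nextNbhdWeight]
  linarith [Real.add_one_le_exp (-(θ * (ρ + k - 1)))]

lemma le_nextListWeight (hρ : 0 ≤ ρ) (hθ : 0 ≤ θ) (hθk : θ * k ≤ 1 / 2)
    (hθρ : θ * (2 * k * ρ + 2) ≤ ε / 8) :
    Real.exp (-(θ * k)) * (ρ - θ * ε / 8) ≤ nextListWeight k ρ θ := by
  set E := Real.exp (-(θ * k)) with hE
  have half_le : 1 / 2 ≤ E := by linarith [Real.add_one_le_exp (-(θ * k))]
  calc E * (ρ - θ * ε / 8)
    _ ≤ ρ * (E * (1 - 2 * θ ^ 2 * k)) - θ ^ 2 := by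
      nlinarith [mul_le_mul_of_nonneg_left hθρ hθ, sq_nonneg θ]
    _ ≤ ρ * (E * Real.exp (-(2 * θ ^ 2 * k))) - θ ^ 2 := by
      gcongr
      exact Real.one_sub_le_exp_neg _
    _ = nextListWeight k ρ θ := by
      rw [nextListWeight, hE, ← Real.exp_add, sub_eq_add_neg (-(θ * k))]

lemma exists_nibble_rate (k : ℕ) (hε : 0 < ε) {r : ℝ} (hr : 0 ≤ r) :
    ∃ θ c : ℝ, 0 < θ ∧ θ ≤ 1 / 2 ∧ 0 < c ∧ ∀ ρ ∈ Set.Icc (1 + ε) r,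
      nextNbhdWeight k ρ θ ≤ 1 ∧ 1 / 4 ≤ nextNbhdWeight k ρ θ ∧
        (ρ + c) * nextNbhdWeight k ρ θ ≤ nextListWeight k ρ θ := by
  have hk : (0 : ℝ) ≤ k := k.cast_nonneg
  set M : ℝ := 16 * k * r + 4 + r + k + ε
  have hM_pos : 0 < M := by positivity
  set θ : ℝ := min ε 1 / (8 * M) with hθ
  have θ_pos : 0 < θ := div_pos (lt_min hε one_pos) (by positivity)
  have mul_le {a : ℝ} (ha : a ≤ M) : θ * a ≤ ε / 8 ∧ θ * a ≤ 1 / 8 := by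
    have θM : θ * M = min ε 1 / 8 := by
      rw [hθ]
      field_simp
    have := mul_le_mul_of_nonneg_left ha θ_pos.le
    constructor <;> linarith [min_le_left ε 1, min_le_right ε 1]
  have hkr : 0 ≤ k * r := mul_nonneg hk hr
  refine ⟨θ, θ * ε / 8, θ_pos, ?_, by positivity, fun ρ ⟨hρ, hρr⟩ => ?_⟩
  · linarith [(mul_le (a := 1) (by linarith)).2]
  have hkρ : k * ρ ≤ k * r := mul_le_mul_of_nonneg_left hρr hk
  have hρ0 : 0 ≤ ρ := by linarith
  have hθε : θ * ε ≤ 1 / 2 := by linarith [(mul_le (a := ε) (by linarith)).2]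
  have hθk : θ * k ≤ 1 / 2 := by linarith [(mul_le (a := k) (by linarith)).2]
  have nbhd_le := nextNbhdWeight_le hε.le hρ θ_pos.le hθk hθε (mul_le (by linarith)).1
  have le_list := le_nextListWeight hρ0 θ_pos.le hθk
    (mul_le (a := 2 * k * ρ + 2) (by linarith)).1
  have hθε0 : 0 ≤ θ * ε := by positivity
  set E := Real.exp (-(θ * k))
  refine ⟨nbhd_le.trans ?_, ?_, ?_⟩
  · exact mul_le_one₀ (Real.exp_le_one_iff.2 (by linarith [mul_nonneg θ_pos.le hk]))
      (by linarith) (by linarith)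
  · linarith [one_sub_le_nextNbhdWeight (k := k) (θ := θ) hρ0,
      (mul_le (a := ρ + k - 1) (by linarith)).2]
  · calc (ρ + θ * ε / 8) * nextNbhdWeight k ρ θ
      _ ≤ (ρ + θ * ε / 8) * (E * (1 - θ * ε / 4)) := by gcongr
      _ = E * ((ρ + θ * ε / 8) * (1 - θ * ε / 4)) := by ring
      _ ≤ E * (ρ - θ * ε / 8) := by
        gcongr
        nlinarith
      _ ≤ nextListWeight k ρ θ := le_list

end NibbleRate

section Iteration

open scoped Classical

open Filter Topology

variable {ι V : Type*} {k : ℕ} {π : ι → Finset V} {G : SimpleGraph ι} {S S' : Finset ι}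
  {μ : ι → ℝ} {ρ ρ' y θ b n : ℝ} {i : ι}

lemma IsWeightedListSystem.exists_isNibble (h : IsWeightedListSystem k π G S μ ρ y) (hρ : 1 ≤ ρ)
    (hy : k + 1 ≤ y) (hθ0 : 0 ≤ θ) (hθ1 : θ ≤ 1 / 2) :
    ∃ S' ⊆ S, IsNibble k π G S' μ ρ y θ ∧
      (HasIndepTransversal π G S' → HasIndepTransversal π G S) := by
  have one_le_y : 1 ≤ y := by linarith [k.cast_nonneg (α := ℝ)]
  have le_target (i : ι) (hi : i ∈ S) : μ i ≤ ρ :=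
    ((h.le_inv_sq i hi).trans ((div_le_one₀ (by positivity)).2 (one_le_pow₀ one_le_y))).trans hρ
  obtain ⟨S', hS', bounds⟩ :=
    exists_subset_fibre_sum_le_two_mul (by linarith) le_target h.le_list
  refine ⟨S', hS', ⟨⟨h.toIsBlockingSystem, fun i hi => h.nonneg i (hS' hi),
    fun i hi => h.le_inv_sq i (hS' hi), fun i hi => (bounds i (hS' hi)).1, fun i hi v hv => ?_⟩,
    fun i hi => (bounds i (hS' hi)).2, hy, hθ0, hθ1⟩, fun hT => hT.of_subset hS' fun i hi => ?_⟩
  · refine le_trans (Finset.sum_le_sum_of_subset_of_nonneg (Finset.filter_subset_filter _ hS')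
      fun j hj _ => h.nonneg j (Finset.mem_filter.1 hj).1) (h.nbhd_le i (hS' hi) v hv)
  · obtain ⟨j, hj, -⟩ := Finset.exists_ne_zero_of_sum_ne_zero
      (by linarith [(bounds i hi).1] : ∑ j ∈ S' with π j = π i, μ j ≠ 0)
    exact ⟨j, Finset.mem_filter.1 hj⟩

lemma IsNibble.card_closedNbhd_le (h : IsNibble k π G S μ ρ y θ) (hb : 0 < b)
    (hμ : ∀ i ∈ S, b ≤ μ i) (hi : i ∈ S) :
    (closedNbhd π G S i).card ≤ ⌊(2 * ρ + k) / b⌋₊ := by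
  refine Nat.le_floor ((le_div_iff₀ hb).2 ?_)
  calc (closedNbhd π G S i).card * b
    _ ≤ ∑ j ∈ closedNbhd π G S i, μ j := by
      rw [← nsmul_eq_mul]
      exact Finset.card_nsmul_le_sum _ _ _ fun j hj => hμ j (closedNbhd_subset π G S i hj)
    _ = ∑ j ∈ S with π j = π i, μ j + ∑ j ∈ S with G.Adj i j, μ j := by
      have disjoint : Disjoint {j ∈ S | π j = π i} {j ∈ S | G.Adj i j} :=
        Finset.disjoint_filter.2 fun j _ hji hij => h.ne_of_adj hij hji.symm
      rw [← Finset.sum_union disjoint, ← Finset.filter_or]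
      exact Finset.sum_congr (by ext j; simp only [closedNbhd, Finset.mem_filter]) fun _ _ => rfl
    _ ≤ 2 * ρ + k := add_le_add (h.list_le i hi) (h.sum_adj_le hi)

lemma IsNibble.rescale (h : IsNibble k π G S μ ρ y θ) (hS' : S' ⊆ S) (hn : 1 / 4 ≤ n)
    (hlist : ∀ i ∈ S', ρ' * n ≤ ∑ j ∈ S' with π j = π i, equalizedWeight k G S μ θ j)
    (hnbhd : ∀ i ∈ S', ∀ v ∈ π i, ∑ j ∈ colourNbhd π G S' i v, equalizedWeight k G S μ θ j ≤ n) :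
    IsWeightedListSystem k π G S' (fun j => equalizedWeight k G S μ θ j / n) ρ' (y / 2) where
  toIsBlockingSystem := h.toIsBlockingSystem
  nonneg i hi := div_nonneg (h.equalizedWeight_nonneg (hS' hi)) (by linarith)
  le_inv_sq i hi := by
    have hy := h.one_le
    calc equalizedWeight k G S μ θ i / n
      _ ≤ 1 / y ^ 2 / (1 / 4) := by
        gcongr
        exact (h.equalizedWeight_le (hS' hi)).trans (h.le_inv_sq i (hS' hi))
      _ = 1 / (y / 2) ^ 2 := by
        field_simp
        norm_num
  le_list i hi := by
    rw [← Finset.sum_div, le_div_iff₀ (by linarith)]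
    exact hlist i hi
  nbhd_le i hi v hv := by
    rw [← Finset.sum_div, div_le_one₀ (by linarith)]
    exact hnbhd i hi v hv

lemma IsNibble.exp_neg_mul_le_equalizedWeight (h : IsNibble k π G S μ ρ y θ) (hi : i ∈ S) :
    Real.exp (-k) * μ i ≤ equalizedWeight k G S μ θ i := by
  rw [equalizedWeight, mul_comm]
  refine mul_le_mul_of_nonneg_left (Real.exp_le_exp.2 (neg_le_neg ?_)) (h.nonneg i hi)
  have adj_nonneg : 0 ≤ ∑ l ∈ S with G.Adj i l, μ l :=
    Finset.sum_nonneg fun l hl => h.nonneg l (Finset.mem_filter.1 hl).1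
  nlinarith [h.rate_nonneg, h.rate_le]

lemma eventually_mul_floor_pow_mul_exp_le_one {a c : ℝ} (C D M : ℝ) (hC : 0 ≤ C) (hD : 0 ≤ D)
    (m : ℕ) (hc : m * c < a) :
    ∀ᶠ y : ℝ in atTop,
      C * (⌊D / Real.exp (-(c * y))⌋₊ : ℝ) ^ m * Real.exp (M - a * y) ≤ 1 := by
  have decay : Tendsto (fun y => C * D ^ m * Real.exp M * Real.exp (-((a - m * c) * y))) atTop
      (𝓝 (C * D ^ m * Real.exp M * 0)) :=
    (Real.tendsto_exp_neg_atTop_nhds_zero.comp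
      (tendsto_id.const_mul_atTop (sub_pos.2 hc))).const_mul _
  rw [mul_zero] at decay
  filter_upwards [decay.eventually_le_const one_pos] with y hy
  calc C * (⌊D / Real.exp (-(c * y))⌋₊ : ℝ) ^ m * Real.exp (M - a * y)
    _ ≤ C * (D / Real.exp (-(c * y))) ^ m * Real.exp (M - a * y) := by
      gcongr
      exact Nat.floor_le (by positivity)
    _ = C * D ^ m * (Real.exp (m * (c * y)) * Real.exp (M - a * y)) := by
      rw [Real.exp_neg, div_inv_eq_mul, mul_pow, ← Real.exp_nat_mul]
      ring
    _ = C * D ^ m * Real.exp M * Real.exp (-((a - m * c) * y)) := by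
      rw [← Real.exp_add, mul_assoc _ (Real.exp M), ← Real.exp_add]
      ring_nf
    _ ≤ 1 := hy

/-- Ratio `ρ` of list weight to conflict weight suffices for an independent transversal, as long as
the weights of the coloured edges lie between `exp (-(c * y))` and `1 / y ^ 2` for some constant
`c > 0` and all large `y`. -/
def HasTransversalsAtRatio.{u, v} (k : ℕ) (ρ : ℝ) : Prop :=
  ∃ c > 0, ∀ᶠ y : ℝ in atTop,
    ∀ {ι : Type u} {V : Type v} (π : ι → Finset V) (G : SimpleGraph ι) (S : Finset ι) (μ : ι → ℝ),
      IsWeightedListSystem k π G S μ ρ y → (∀ i ∈ S, Real.exp (-(c * y)) ≤ μ i) →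
        HasIndepTransversal π G S

lemma HasTransversalsAtRatio.of_nibble.{u, v} (h : HasTransversalsAtRatio.{u, v} k ρ')
    (hρ : 1 ≤ ρ) (hρ' : 0 ≤ ρ') (hθ0 : 0 < θ) (hθ1 : θ ≤ 1 / 2) (hn0 : 1 / 4 ≤ nextNbhdWeight k ρ θ)
    (hn1 : nextNbhdWeight k ρ θ ≤ 1) (hlist : ρ' * nextNbhdWeight k ρ θ ≤ nextListWeight k ρ θ) :
    HasTransversalsAtRatio.{u, v} k ρ := by
  obtain ⟨c', hc', next⟩ := h
  set c : ℝ := min (c' / 4) (θ ^ 2 / 36)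
  have c_pos : 0 < c := by positivity
  have c_lt : (9 : ℕ) * c < θ ^ 2 / 2 := by
    push_cast
    linarith [min_le_right (c' / 4) (θ ^ 2 / 36), sq_pos_of_pos hθ0]
  have local_condition := eventually_mul_floor_pow_mul_exp_le_one (4 * (1 + 4 * k)) (2 * ρ + k)
    ((k + 1) * (2 * ρ + k)) (by positivity) (by positivity) 9 c_lt
  refine ⟨c, c_pos, ?_⟩
  filter_upwards [(tendsto_id.atTop_div_const two_pos).eventually next, local_condition,
    eventually_ge_atTop (k + 1 : ℝ), eventually_ge_atTop (4 * k / c')]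
    with y transversal_half hlocal hky hcy ι V π G S μ system hμ
  obtain ⟨S₁, hS₁, nibble, lift₁⟩ := system.exists_isNibble hρ hky hθ0.le hθ1
  obtain ⟨S₂, hS₂, lift₂, hlist₂, hnbhd₂⟩ := nibble.exists_subset
    (fun i hi => nibble.card_closedNbhd_le (Real.exp_pos _) (fun j hj => hμ j (hS₁ hj)) hi)
    hlocal ((mul_nonneg hρ' (by linarith)).trans hlist)
  refine lift₁ (lift₂ (transversal_half π G S₂ _
    (nibble.rescale hS₂ hn0 (fun i hi => hlist.trans (hlist₂ i hi)) hnbhd₂) fun i hi => ?_))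
  calc Real.exp (-(c' * (y / 2)))
    _ ≤ Real.exp (-k) * Real.exp (-(c * y)) := by
      rw [← Real.exp_add]
      refine Real.exp_le_exp.2 ?_
      nlinarith [(div_le_iff₀' hc').1 hcy, min_le_left (c' / 4) (θ ^ 2 / 36)]
    _ ≤ Real.exp (-k) * μ i := by
      gcongr
      exact hμ i (hS₁ (hS₂ hi))
    _ ≤ equalizedWeight k G S₁ μ θ i := nibble.exp_neg_mul_le_equalizedWeight (hS₂ hi)
    _ ≤ equalizedWeight k G S₁ μ θ i / nextNbhdWeight k ρ θ :=
      le_div_self (nibble.equalizedWeight_nonneg (hS₂ hi)) (by linarith) hn1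

lemma hasTransversalsAtRatio_of_four_mul_le.{u, v} (hρ : 0 < ρ) (hk : 4 * k ≤ ρ) :
    HasTransversalsAtRatio.{u, v} k ρ :=
  ⟨1, one_pos, .of_forall fun _ _ _ _ _ _ _ h _ =>
    hasIndepTransversal_of_sum_adj_le h.nonneg hρ (by convert h.le_list) fun _ hi =>
      (h.sum_adj_le hi).trans (by linarith)⟩

theorem hasTransversalsAtRatio_of_one_lt.{u, v} (k : ℕ) (hρ : 1 < ρ) :
    HasTransversalsAtRatio.{u, v} k ρ := by
  obtain ⟨θ, c, hθ0, hθ1, hc, hrate⟩ :=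
    exists_nibble_rate k (sub_pos.2 hρ) (r := 4 * k + 1) (by positivity)
  have increments (m : ℕ) :
      ∀ ρ' ≥ ρ, 4 * k + 1 ≤ ρ' + m * c → HasTransversalsAtRatio.{u, v} k ρ' := by
    induction m with
    | zero =>
      intro ρ' hρ' hm
      rw [Nat.cast_zero, zero_mul, add_zero] at hm
      exact hasTransversalsAtRatio_of_four_mul_le (by linarith) (by linarith)
    | succ m ih =>
      intro ρ' hρ' hm
      obtain hlarge | hsmall := le_total (4 * k + 1 : ℝ) ρ'
      · exact hasTransversalsAtRatio_of_four_mul_le (by linarith) (by linarith)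
      obtain ⟨hn1, hn0, hlist⟩ := hrate ρ' ⟨by linarith, hsmall⟩
      refine (ih (ρ' + c) (by linarith) ?_).of_nibble (by linarith) (by linarith) hθ0 hθ1 hn0 hn1
        hlist
      push_cast at hm
      linarith
  obtain ⟨m, hm⟩ := exists_nat_ge ((4 * k + 1 - ρ) / c)
  exact increments m ρ le_rfl (by linarith [(div_le_iff₀ hc).1 hm])

end Iteration

/-! ### The conflict graph of an edge correspondence -/

section ConflictGraph

variable {V : Type} [DecidableEq V] {E : Finset (Finset V)} {σ : Finset V → Finset V → ℕ ≃ ℕ}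
  {L : Finset V → Finset ℕ} {μ : Finset V → ℕ → ℝ} {k : ℕ} {ρ y : ℝ}

lemma HIncident.symm {e f : Finset V} (h : HIncident e f) : HIncident f e :=
  ⟨h.1.symm, Finset.inter_comm e f ▸ h.2⟩

/-- The graph on coloured edges that joins `(e, c)` to `(f, c')` when the two block each other. -/
def conflictGraph (hσ : IsEdgeCorrespondence E σ) : SimpleGraph ((_ : E) × ℕ) where
  Adj a b := HIncident a.1.1 b.1 ∧ σ b.1 a.1 b.2 = a.2
  symm := ⟨fun a b ⟨hab, blocks⟩ => ⟨hab.symm, by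
    rw [hσ b.1 b.1.2 a.1 a.1.2 hab.symm, ← blocks, Equiv.symm_apply_apply]⟩⟩
  loopless := ⟨fun _ h => h.1.1 rfl⟩

/-- The coloured edges `(e, c)` with `c` in the list of `e`. -/
def colouredEdges (E : Finset (Finset V)) (L : Finset V → Finset ℕ) : Finset ((_ : E) × ℕ) :=
  Finset.univ.sigma fun e => L e

lemma isBlockingSystem_conflictGraph (hσ : IsEdgeCorrespondence E σ)
    (hcard : ∀ e ∈ E, e.card ≤ k) (hlin : ∀ e ∈ E, ∀ f ∈ E, e ≠ f → (e ∩ f).card ≤ 1) :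
    IsBlockingSystem k (fun a => a.1.1) (conflictGraph hσ) where
  ne_of_adj h := h.1.1
  exists_mem_of_adj h := by
    obtain ⟨v, hv⟩ := h.1.2
    exact ⟨v, Finset.mem_inter.1 hv⟩
  eq_of_adj := by
    rintro ⟨e, c⟩ ⟨f, d⟩ ⟨f', d'⟩ ⟨-, hd⟩ ⟨-, hd'⟩ hff'
    obtain rfl : f = f' := Subtype.ext hff'
    exact congrArg (Sigma.mk f) ((σ f e).injective (hd.trans hd'.symm))
  eq_of_mem {i j _ _} hij hui huj hvi hvj :=
    Finset.card_le_one.1 (hlin i.1 i.1.2 j.1 j.1.2 hij) _ (Finset.mem_inter.2 ⟨hui, huj⟩) _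
      (Finset.mem_inter.2 ⟨hvi, hvj⟩)
  card_le i := hcard i.1 i.1.2

lemma sum_colouredEdges_filter_edge_eq (μ : Finset V → ℕ → ℝ) (e : E) :
    ∑ a ∈ colouredEdges E L with a.1.1 = e.1, μ a.1 a.2 = ∑ c ∈ L e, μ e c := by
  rw [colouredEdges, Finset.sum_filter, Finset.sum_sigma, Finset.sum_eq_single e]
  · simp only [if_true]
  · intro f _ hfe
    simp only [Subtype.coe_injective.ne hfe, if_false, Finset.sum_const_zero]
  · exact fun he => absurd (Finset.mem_univ e) he

lemma sum_colourNbhd_conflictGraph (hσ : IsEdgeCorrespondence E σ) (μ : Finset V → ℕ → ℝ)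
    (i : (_ : E) × ℕ) {v : V} (hv : v ∈ i.1.1) :
    ∑ a ∈ colourNbhd (fun a => a.1.1) (conflictGraph hσ) (colouredEdges E L) i v, μ a.1 a.2 =
      NWeight E L μ σ i.1 v i.2 := by
  have mem_iff (f : E) (c : ℕ) : (conflictGraph hσ).Adj i ⟨f, c⟩ ∧ v ∈ f.1 ↔
      (v ∈ f.1 ∧ f.1 ≠ i.1) ∧ σ f i.1 c = i.2 :=
    ⟨fun ⟨⟨hif, blocks⟩, hvf⟩ => ⟨⟨hvf, hif.1.symm⟩, blocks⟩, fun ⟨⟨hvf, hfi⟩, blocks⟩ =>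
      ⟨⟨⟨hfi.symm, v, Finset.mem_inter.2 ⟨hv, hvf⟩⟩, blocks⟩, hvf⟩⟩
  rw [NWeight, Finset.sum_filter, ← Finset.sum_coe_sort E, colourNbhd, Finset.sum_filter,
    colouredEdges, Finset.sum_sigma]
  refine Finset.sum_congr rfl fun f _ => ?_
  simp only [mem_iff, ite_and, Finset.sum_filter, ne_eq]
  split_ifs <;> simp

lemma isWeightedListSystem_conflictGraph (hσ : IsEdgeCorrespondence E σ)
    (hcard : ∀ e ∈ E, e.card ≤ k) (hlin : ∀ e ∈ E, ∀ f ∈ E, e ≠ f → (e ∩ f).card ≤ 1)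
    (hμ0 : ∀ e ∈ E, ∀ c ∈ L e, 0 ≤ μ e c) (hμ : ∀ e ∈ E, ∀ c ∈ L e, μ e c ≤ 1 / y ^ 2)
    (hlist : ∀ e ∈ E, ρ ≤ ∑ c ∈ L e, μ e c)
    (hnbhd : ∀ e ∈ E, ∀ v ∈ e, ∀ c ∈ L e, NWeight E L μ σ e v c ≤ 1) :
    IsWeightedListSystem k (fun a => a.1.1) (conflictGraph hσ) (colouredEdges E L)
      (fun a => μ a.1 a.2) ρ y where
  toIsBlockingSystem := isBlockingSystem_conflictGraph hσ hcard hlin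
  nonneg i hi := hμ0 i.1 i.1.2 i.2 (Finset.mem_sigma.1 hi).2
  le_inv_sq i hi := hμ i.1 i.1.2 i.2 (Finset.mem_sigma.1 hi).2
  le_list i _ := by
    refine (hlist i.1 i.1.2).trans_eq ?_
    rw [← sum_colouredEdges_filter_edge_eq]
    congr!
  nbhd_le i hi v hv := by
    rw [sum_colourNbhd_conflictGraph hσ μ i hv]
    exact hnbhd i.1 i.1.2 v hv i.2 (Finset.mem_sigma.1 hi).2

lemma exists_isLσColouring_of_hasIndepTransversal {hσ : IsEdgeCorrespondence E σ}
    (h : HasIndepTransversal (fun a => a.1.1) (conflictGraph hσ) (colouredEdges E L))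
    (hL : ∀ e ∈ E, (L e).Nonempty) : ∃ γ, IsLσColouring E L σ γ := by
  obtain ⟨A, hA, independent, transversal⟩ := h
  have coloured (e : Finset V) (he : e ∈ E) : ∃ c, ⟨⟨e, he⟩, c⟩ ∈ A := by
    obtain ⟨c, hc⟩ := hL e he
    obtain ⟨⟨⟨f, hf⟩, d⟩, hfd, rfl⟩ :=
      transversal ⟨⟨e, he⟩, c⟩ (Finset.mem_sigma.2 ⟨Finset.mem_univ _, hc⟩)
    exact ⟨d, hfd⟩
  choose! γ hγ using coloured
  refine ⟨γ, fun e he => (Finset.mem_sigma.1 (hA (hγ e he))).2, fun e he f hf hef blocks => ?_⟩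
  have hfe : f ≠ e := hef.1.symm
  exact independent (hγ f hf) (hγ e he) (fun h => hfe (congrArg (fun a => a.1.1) h))
    ⟨hef.symm, blocks⟩

end ConflictGraph

theorem stmt_2_general (k : ℕ) {ε : ℝ} (hε : 0 < ε) :
    ∃ b > 0, ∃ δ₀ : ℝ, ∀ δ ≥ δ₀, ∀ (V : Type) [DecidableEq V]
      (E : Finset (Finset V)) (σ : Finset V → Finset V → ℕ ≃ ℕ)
      (L : Finset V → Finset ℕ) (μ : Finset V → ℕ → ℝ),
      (∀ e ∈ E, e.card ≤ k) →
      (∀ e ∈ E, ∀ f ∈ E, e ≠ f → (e ∩ f).card ≤ 1) →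
      IsEdgeCorrespondence E σ →
      (∀ e ∈ E, ∀ c ∈ L e, Real.exp (-(b * √δ)) ≤ μ e c ∧ μ e c ≤ δ⁻¹) →
      (∀ e ∈ E, 1 + ε ≤ ∑ c ∈ L e, μ e c) →
      (∀ e ∈ E, ∀ v ∈ e, ∀ c ∈ L e, NWeight E L μ σ e v c ≤ 1) →
      ∃ γ : Finset V → ℕ, IsLσColouring E L σ γ := by
  obtain ⟨b, hb, transversals⟩ :=
    hasTransversalsAtRatio_of_one_lt.{0, 0} k (lt_add_of_pos_right 1 hε)
  obtain ⟨δ₀, hδ₀⟩ := Filter.eventually_atTop.1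
    ((Real.tendsto_sqrt_atTop.eventually transversals).and (Filter.eventually_ge_atTop 0))
  refine ⟨b, hb, δ₀, fun δ hδ V _ E σ L μ hcard hlin hσ hμ hlist hnbhd => ?_⟩
  obtain ⟨transversal, δ_nonneg⟩ := hδ₀ δ hδ
  have system := isWeightedListSystem_conflictGraph (y := √δ) hσ hcard hlin
    (fun e he c hc => (Real.exp_pos _).le.trans (hμ e he c hc).1)
    (fun e he c hc => by simpa [Real.sq_sqrt δ_nonneg] using (hμ e he c hc).2) hlist hnbhd
  refine exists_isLσColouring_of_hasIndepTransversal (transversal _ _ _ _ system fun i hi =>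
    (hμ i.1 i.1.2 i.2 (Finset.mem_sigma.1 hi).2).1) fun e he => ?_
  exact Finset.nonempty_of_sum_ne_zero (by linarith [hlist e he] : ∑ c ∈ L e, μ e c ≠ 0)

lemma eventually_rpow_le_mul_sqrt {a b : ℝ} (ha : a < 1 / 2) (hb : 0 < b) :
    ∀ᶠ x : ℝ in Filter.atTop, x ^ a ≤ b * √x := by
  filter_upwards [(tendsto_rpow_neg_atTop (sub_pos.2 ha)).eventually_le_const hb,
    Filter.eventually_gt_atTop 0] with x hx hx0
  calc x ^ a
    _ = x ^ (-(1 / 2 - a)) * √x := by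
      rw [Real.sqrt_eq_rpow, ← Real.rpow_add hx0]
      ring_nf
    _ ≤ b * √x := by gcongr

theorem stmt_2 :
    ∀ (k : ℕ) (ε : ℝ), 0 < ε →
    ∃ δ₀ : ℕ, ∀ δ : ℕ, δ₀ ≤ δ →
    ∀ (V : Type) [Fintype V] [DecidableEq V]
      (E : Finset (Finset V)) (σ : Finset V → Finset V → ℕ ≃ ℕ)
      (L : Finset V → Finset ℕ) (μ : Finset V → ℕ → ℝ),
      -- G is k-uniform
      (∀ e ∈ E, e.card = k) →
      -- G is linear
      (∀ e ∈ E, ∀ f ∈ E, e ≠ f → (e ∩ f).card ≤ 1) →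
      IsEdgeCorrespondence E σ →
      -- (L, μ) is an assignment of weighted lists: weights lie in (0,1]
      (∀ e ∈ E, ∀ c ∈ L e, 0 < μ e c ∧ μ e c ≤ 1) →
      -- (a)
      (∀ e ∈ E, ∀ c ∈ L e,
        Real.exp (-((δ : ℝ) ^ ((1 : ℝ) / 25))) ≤ μ e c ∧ μ e c ≤ (δ : ℝ)⁻¹) →
      -- (b)
      (∀ e ∈ E, 1 + ε ≤ ∑ c ∈ L e, μ e c) →
      -- (c)
      (∀ e ∈ E, ∀ v ∈ e, ∀ c ∈ L e, NWeight E L μ σ e v c ≤ 1) →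
      ∃ γ : Finset V → ℕ, IsLσColouring E L σ γ := by
  intro k ε hε
  obtain ⟨b, hb, δ₁, colouring⟩ := stmt_2_general k hε
  obtain ⟨δ₀, hδ₀⟩ := Filter.eventually_atTop.1 <| tendsto_natCast_atTop_atTop.eventually <|
    (eventually_rpow_le_mul_sqrt (a := 1 / 25) (by norm_num) hb).and (Filter.eventually_ge_atTop δ₁)
  refine ⟨δ₀, fun δ hδ V _ _ E σ L μ hunif hlin hσ _ hμ hlist hnbhd => ?_⟩
  obtain ⟨rpow_le, hδ₁⟩ := hδ₀ δ hδ
  exact colouring δ hδ₁ V E σ L μ (fun e he => (hunif e he).le) hlin hσ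
    (fun e he c hc => ⟨(Real.exp_le_exp.2 (neg_le_neg rpow_le)).trans (hμ e he c hc).1,
      (hμ e he c hc).2⟩) hlist hnbhd
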